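/- arXiv:2203.01423 — 2 statements merged into one kernel-verified Lean document; each statement's English description precedes it below -/
import Mathlib

section
/- Let X = L ∪ J ∪ R be a continuum in the class 𝒞 such that R is a singleton, L is nondegenerate, and R ⊆ L. Then a set M belongs to 𝓜(X) if and only if there exists an arc A with R ⊆ A ⊆ R ∪ J and A ≠ R ∪ J such that M ∈ 𝓜(L ∪ A) (the set L ∪ A carrying the subspace topology). That is, 𝓜(X) = ⋃{𝓜(L ∪ A) : A an arc with R ⊆ A ⊊ R ∪ J}. -/
/-!
The space is `L` together with a curve `h` on `(0, 1]` which starts at the point `h 1` of `R ⊆ L`,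
runs through the free interval `J = h '' (0, 1)`, and accumulates exactly on `L` as `t → 0`
(`RayModel`, obtained in `ClassC.exists_rayModel`). The oscillating end of the ray is the only
place where `X` fails to be a Peano continuum, and three facts about it give the theorem.

* `RayModel.minimal_avoids_end`: a minimal set `M` of a map `F` misses `h '' (0, s)` for some
  `s > 0`. A locally connected compact space cannot be mapped into `X` so that its image enters
  every `h '' (0, s)`, because a small connected set near a point of `L` is cut off from the end
  of the ray by points of the ray near another point of `L`; this is where `L` nondegenerate is
  used. Hence, if `M` met the ray arbitrarily close to its end, the corresponding points would be
  images of points that are again close to the end, so `F` would map a final piece of the ray into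
  the ray near its end. By density `F` would map `L` into itself, and `M ∩ L` would be a proper
  closed invariant subset of `M`.

* `RayModel.exists_retraction`: `L ∪ h '' [s, 1]` is a retract of `X`. The missing piece of the
  ray first runs back along `h '' [s, 1]` to the point `h 1 ∈ L` and then has to stay in `L`, with
  distance to `h t` tending to `0`. Such a path exists because nearest points of `L` to `h t` have
  jumps tending to `0`, and in a Peano continuum a function with vanishing jumps is asymptotic to
  a continuous one (`exists_continuousOn_asymptotic`). Consequently
  (`mem_MSetIn_iff_of_retraction`) `𝓜(L ∪ h '' [s, 1])` consists of the elements of `𝓜(X)` that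
  lie in `L ∪ h '' [s, 1]`.

* `RayModel.arc_eq`: the arcs `A` with `R ⊆ A ⊆ R ∪ J` are exactly the sets `h '' [s, 1]`.
-/

open Set Topology

/-- A topological space has no isolated points if no singleton is open. -/
def NoIsolatedPoints (Y : Type*) [TopologicalSpace Y] : Prop :=
  ∀ y : Y, ¬ IsOpen ({y} : Set Y)

/-- `(M, f|_M)` is a minimal dynamical system with `f(M) = M`:
`M` is nonempty, `f(M) = M`, and `M` has no nonempty proper closed subset
invariant under `f|_M`. -/
def MinimalSystemOn {Y : Type*} [TopologicalSpace Y] (f : Y → Y) (M : Set Y) : Prop :=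
  M.Nonempty ∧ f '' M = M ∧
    ∀ N, N ⊆ M → N.Nonempty → IsClosed N → f '' N ⊆ N → N = M

/-- The system `𝓜(Y)` of all compact sets `M ⊆ Y` such that there is a continuous
`f : Y → Y` with `f(M) = M` and `(M, f|_M)` a minimal dynamical system. -/
def MSpace (Y : Type*) [TopologicalSpace Y] : Set (Set Y) :=
  {M | IsCompact M ∧ ∃ f : Y → Y, Continuous f ∧ MinimalSystemOn f M}

/-- `𝓜(Z)` for a subspace `Z ⊆ X` (carrying the subspace topology),
viewed as a system of subsets of `X`. -/
def MSetIn {X : Type*} [TopologicalSpace X] (Z : Set X) : Set (Set X) :=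
  {M | ∃ M' ∈ MSpace (↥Z), M = Subtype.val '' M'}

/-- `𝓜*(L; R)`: members of `𝓜(L ∪ R)` (`= 𝓜(L ⊔ R)` for disjoint `L, R`) such that
`M ∩ L` and `M ∩ R` have the same cardinality. -/
def MStarIn {X : Type*} [TopologicalSpace X] (L R : Set X) : Set (Set X) :=
  {M | M ∈ MSetIn (L ∪ R) ∧ Cardinal.mk ↥(M ∩ L) = Cardinal.mk ↥(M ∩ R)}

/-- An arc: a set homeomorphic to `[0,1]`. -/
def IsArc {X : Type*} [TopologicalSpace X] (A : Set X) : Prop :=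
  Nonempty (↥A ≃ₜ ↥(Set.Icc (0:ℝ) 1))

/-- A ray: a set homeomorphic to `[0,∞)`. -/
def IsRaySet {X : Type*} [TopologicalSpace X] (A : Set X) : Prop :=
  Nonempty (↥A ≃ₜ ↥(Set.Ici (0:ℝ)))

/-- A Cantor set: nonempty, compact, totally disconnected, without isolated points
(metrizability is inherited from the ambient space). -/
def IsCantorSet {X : Type*} [TopologicalSpace X] (M : Set X) : Prop :=
  M.Nonempty ∧ IsCompact M ∧ IsTotallyDisconnected M ∧ NoIsolatedPoints ↥M

/-- A circle: a set homeomorphic to the unit circle `S¹ ⊆ ℂ`. -/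
def IsCircleSet {X : Type*} [TopologicalSpace X] (C : Set X) : Prop :=
  Nonempty (↥C ≃ₜ ↥(Metric.sphere (0:ℂ) 1))

/-- A cantoroid: a nonempty compact (metrizable) set without isolated points in which
the union of the degenerate (singleton) connected components is dense. -/
def IsCantoroid {X : Type*} [TopologicalSpace X] (M : Set X) : Prop :=
  M.Nonempty ∧ IsCompact M ∧ NoIsolatedPoints ↥M ∧
    Dense {x : ↥M | connectedComponent x = {x}}

/-- A union of finitely many (at least one) pairwise disjoint circles. -/
def FinUnionDisjCircles {X : Type*} [TopologicalSpace X] (M : Set X) : Prop :=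
  ∃ (n : ℕ) (C : Fin n → Set X), 0 < n ∧ (∀ i, IsCircleSet (C i)) ∧
    Pairwise (Function.onFun Disjoint C) ∧ M = ⋃ i, C i

/-- A local dendrite: a locally connected continuum containing only finitely many circles. -/
def IsLocalDendrite {X : Type*} [TopologicalSpace X] (L : Set X) : Prop :=
  IsCompact L ∧ IsConnected L ∧ LocallyConnectedSpace ↥L ∧
    {C : Set X | C ⊆ L ∧ IsCircleSet C}.Finite

/-- The decomposition `X = L ∪ J ∪ R` witnessing that the continuum `X` belongs to the
class `𝒞`: `J` is a free interval dense in `X`; `L` and `R` are locally connected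
subcontinua of `X` disjoint from `J`; and there are rays `J_L, J_R` with
`J = J_L ∪ J_R` such that `L ∪ J_L` is a compactification of `J_L` and `R ∪ J_R` is a
compactification of `J_R`. -/
structure ClassC {X : Type*} [TopologicalSpace X] (L J R : Set X) : Prop where
  union_eq : L ∪ J ∪ R = Set.univ
  openJ : IsOpen J
  freeJ : Nonempty (↥J ≃ₜ ↥(Set.Ioo (0:ℝ) 1))
  denseJ : Dense J
  compactL : IsCompact L
  connL : IsConnected L
  locConnL : LocallyConnectedSpace ↥L
  compactR : IsCompact R
  connR : IsConnected R
  locConnR : LocallyConnectedSpace ↥R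
  disjLJ : Disjoint L J
  disjRJ : Disjoint R J
  rays : ∃ JL JR : Set X, JL ∪ JR = J ∧ IsRaySet JL ∧ IsRaySet JR ∧
    IsCompact (L ∪ JL) ∧ L ∪ JL ⊆ closure JL ∧
    IsCompact (R ∪ JR) ∧ R ∪ JR ⊆ closure JR

open Filter Metric

/-! ### Continuous functions asymptotic to functions with vanishing jumps -/

/-- `g` jumps by less than `δ` at each point of `S`: a quantitative weakening of
continuity on `S`, which only looks at the values near `t` compared with the value at `t`. -/
def JumpLT {Y : Type*} [MetricSpace Y] (δ : ℝ) (S : Set ℝ) (g : ℝ → Y) : Prop :=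
  ∀ t ∈ S, ∀ᶠ u in 𝓝[S] t, dist (g u) (g t) < δ

lemma JumpLT.mono {Y : Type*} [MetricSpace Y] {δ : ℝ} {S T : Set ℝ} {g : ℝ → Y}
    (h : JumpLT δ S g) (hT : T ⊆ S) : JumpLT δ T g :=
  fun t ht => (h t (hT ht)).filter_mono (nhdsWithin_mono t hT)

lemma JumpLT.glue {Y : Type*} [MetricSpace Y] {δ b : ℝ} {S : Set ℝ} {f g : ℝ → Y}
    (hf : JumpLT δ (S ∩ Iic b) f) (hg : JumpLT δ (S ∩ Ici b) g) (e : f b = g b) :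
    JumpLT δ S (fun t => if t ≤ b then f t else g t) := by
  intro t ht
  rw [eventually_nhdsWithin_iff]
  rcases lt_trichotomy t b with h | h | h
  · have h1 := eventually_nhdsWithin_iff.1 (hf t ⟨ht, h.le⟩)
    filter_upwards [h1, Iio_mem_nhds h] with u hu hub huS
    simp only [if_pos h.le, if_pos (mem_Iio.1 hub).le]
    exact hu ⟨huS, (mem_Iio.1 hub).le⟩
  · subst h
    have h1 := eventually_nhdsWithin_iff.1 (hf t ⟨ht, self_mem_Iic⟩)
    have h2 := eventually_nhdsWithin_iff.1 (hg t ⟨ht, self_mem_Ici⟩)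
    filter_upwards [h1, h2] with u hu hu' huS
    simp only [le_refl, if_true]
    by_cases hut : u ≤ t
    · simpa only [if_pos hut] using hu ⟨huS, hut⟩
    · simpa only [if_neg hut, e] using hu' ⟨huS, le_of_not_ge hut⟩
  · have h1 := eventually_nhdsWithin_iff.1 (hg t ⟨ht, h.le⟩)
    filter_upwards [h1, Ioi_mem_nhds h] with u hu hub huS
    simp only [if_neg (not_le.2 h), if_neg (not_le.2 (mem_Ioi.1 hub))]
    exact hu ⟨huS, (mem_Ioi.1 hub).le⟩

/-- There is a function on `[a, b]` from `x` to `y` with jumps less than `δ` whose value at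
each time `t` is allowed by the constraint `V t`. -/
def Seg {Y : Type*} [MetricSpace Y] (δ : ℝ) (V : ℝ → Set Y) (a b : ℝ) (x y : Y) : Prop :=
  ∃ f : ℝ → Y, f a = x ∧ f b = y ∧ (∀ t ∈ Icc a b, f t ∈ V t) ∧ JumpLT δ (Icc a b) f

lemma Seg.trans {Y : Type*} [MetricSpace Y] {δ a b c : ℝ} {V : ℝ → Set Y} {x y z : Y}
    (hab : a ≤ b) (hbc : b ≤ c) (h1 : Seg δ V a b x y) (h2 : Seg δ V b c y z) :
    Seg δ V a c x z := by
  obtain ⟨f, fa, fb, fV, fJ⟩ := h1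
  obtain ⟨g, gb, gc, gV, gJ⟩ := h2
  refine ⟨fun t => if t ≤ b then f t else g t, by simp [hab, fa], ?_, ?_, ?_⟩
  · by_cases h : c ≤ b
    · have : b = c := le_antisymm hbc h
      subst this
      simp only [le_refl, if_true]
      rw [fb, ← gb, gc]
    · simp [h, gc]
  · intro t ht
    by_cases h : t ≤ b
    · simpa [h] using fV t ⟨ht.1, h⟩
    · simpa [h] using gV t ⟨le_of_not_ge h, ht.2⟩
  · refine JumpLT.glue (fJ.mono ?_) (gJ.mono ?_) (fb.trans gb.symm)
    · exact fun t ht => ⟨ht.1.1, ht.2⟩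
    · exact fun t ht => ⟨ht.2, ht.1.2⟩

lemma Seg.mono {Y : Type*} [MetricSpace Y] {δ a b : ℝ} {V W : ℝ → Set Y} {x y : Y}
    (h : Seg δ V a b x y) (hVW : ∀ t ∈ Icc a b, V t ⊆ W t) : Seg δ W a b x y := by
  obtain ⟨f, fa, fb, fV, fJ⟩ := h
  exact ⟨f, fa, fb, fun t ht => hVW t ht (fV t ht), fJ⟩

/-- A step function with a single jump, at the right end point. -/
lemma Seg.step {Y : Type*} [MetricSpace Y] {δ a b : ℝ} (hδ : 0 < δ) (hab : a < b) {C : Set Y}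
    {x y : Y} (hx : x ∈ C) (hy : y ∈ C) (hxy : dist x y < δ) :
    Seg δ (fun _ => C) a b x y := by
  refine ⟨fun t => if t < b then x else y, by simp [hab], by simp, ?_, ?_⟩
  · intro t _
    dsimp only
    split_ifs <;> assumption
  · intro t ht
    rw [eventually_nhdsWithin_iff]
    by_cases h : t < b
    · filter_upwards [Iio_mem_nhds h] with u hu _
      simp [h, mem_Iio.1 hu, hδ]
    · refine Eventually.of_forall fun u _ => ?_
      simp only [h, if_false]
      split_ifs
      · exact hxy
      · simpa using hδ

/-- Points of a preconnected set are joined inside it by functions with arbitrarily small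
jumps, because preconnected sets are chainable. -/
lemma Seg.of_isPreconnected {Y : Type*} [MetricSpace Y] {δ : ℝ} (hδ : 0 < δ) {C : Set Y}
    (hC : IsPreconnected C) {x y : Y} (hx : x ∈ C) (hy : y ∈ C) {a b : ℝ} (hab : a < b) :
    Seg δ (fun _ => C) a b x y := by
  have trans : ∀ u v w : Y, (∀ a b : ℝ, a < b → Seg δ (fun _ => C) a b u v) →
      (∀ a b : ℝ, a < b → Seg δ (fun _ => C) a b v w) →
      ∀ a b : ℝ, a < b → Seg δ (fun _ => C) a b u w := by
    intro u v w h1 h2 a b hab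
    exact Seg.trans (b := (a + b) / 2) (by linarith) (by linarith)
      (h1 _ _ (by linarith)) (h2 _ _ (by linarith))
  have step : ∀ u ∈ C, ∀ v ∈ C, dist u v < δ →
      ∀ a b : ℝ, a < b → Seg δ (fun _ => C) a b u v :=
    fun u hu v hv h a b hab => Seg.step hδ hab hu hv h
  suffices H : ∀ a b : ℝ, a < b → Seg δ (fun _ => C) a b x y from H a b hab
  by_contra hne
  -- Points reachable from `x` and unreachable points have disjoint `δ`-neighbourhoods in `C`.
  obtain ⟨w, hw, hw1, hw2⟩ := hC
    (⋃ z ∈ {z | z ∈ C ∧ ∀ a b : ℝ, a < b → Seg δ (fun _ => C) a b x z}, ball z δ)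
    (⋃ z ∈ {z | z ∈ C ∧ ¬ ∀ a b : ℝ, a < b → Seg δ (fun _ => C) a b x z}, ball z δ)
    (isOpen_biUnion fun _ _ => isOpen_ball) (isOpen_biUnion fun _ _ => isOpen_ball)
    (by
      intro z hz
      by_cases h : ∀ a b : ℝ, a < b → Seg δ (fun _ => C) a b x z
      · exact Or.inl (mem_biUnion (show z ∈ {z | _} from ⟨hz, h⟩) (mem_ball_self hδ))
      · exact Or.inr (mem_biUnion (show z ∈ {z | _} from ⟨hz, h⟩) (mem_ball_self hδ)))
    ⟨x, hx, mem_biUnion (show x ∈ {z | _} from ⟨hx, step x hx x hx (by simpa using hδ)⟩)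
      (mem_ball_self hδ)⟩
    ⟨y, hy, mem_biUnion (show y ∈ {z | _} from ⟨hy, hne⟩) (mem_ball_self hδ)⟩
  simp only [mem_iUnion, exists_prop, mem_ofPred_eq, mem_ball] at hw1 hw2
  obtain ⟨z1, ⟨hz1, hs1⟩, hd1⟩ := hw1
  obtain ⟨z2, ⟨hz2, hs2⟩, hd2⟩ := hw2
  exact hs2 (trans _ _ _ (trans _ _ _ hs1 (step z1 hz1 w hw (by rwa [dist_comm])))
    (step w hw z2 hz2 hd2))

/-- On a compact interval, a function with jumps less than `δ` can be replaced by a nearby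
one with jumps less than a prescribed `δ'`, keeping the end values, as soon as points at
distance less than `2 * δ` lie in small preconnected sets. -/
lemma Seg.refine {Y : Type*} [MetricSpace Y] {δ ε δ' : ℝ} (hδ' : 0 < δ') (hδ : 0 < δ)
    (hε : 0 < ε)
    (hU : ∀ p q : Y, dist p q < 2 * δ →
      ∃ C : Set Y, IsPreconnected C ∧ p ∈ C ∧ q ∈ C ∧ C ⊆ ball p ε)
    {g : ℝ → Y} {a b : ℝ} (hab : a ≤ b) (hg : JumpLT δ (Icc a b) g) :
    Seg δ' (fun t => ball (g t) (ε + 2 * δ)) a b (g a) (g b) := by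
  have hO : ∀ i : Icc a b, ∃ U : Set ℝ, IsOpen U ∧ (i : ℝ) ∈ U ∧
      ∀ u ∈ U, u ∈ Icc a b → dist (g u) (g i) < δ := by
    intro i
    have := eventually_nhdsWithin_iff.1 (hg i i.2)
    obtain ⟨U, h1, h2, h3⟩ := _root_.eventually_nhds_iff.1 this
    exact ⟨U, h2, h3, h1⟩
  choose U Uo Um Ud using hO
  obtain ⟨t, t0, tm, ⟨m, hm⟩, hc⟩ := exists_monotone_Icc_subset_open_cover_Icc hab
    (c := fun i : Icc a b => Subtype.val ⁻¹' U i)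
    (fun i => (Uo i).preimage continuous_subtype_val)
    (fun i _ => mem_iUnion.2 ⟨i, Um i⟩)
  have H : ∀ n, Seg δ' (fun t => ball (g t) (ε + 2 * δ)) a (t n) (g a) (g (t n)) := by
    intro n
    induction n with
    | zero =>
      refine ⟨fun _ => g a, rfl, by rw [t0], ?_, ?_⟩
      · intro s hs
        rw [t0, Icc_self, mem_singleton_iff] at hs
        subst hs
        exact mem_ball_self (by positivity)
      · intro s _
        simp [hδ']
    | succ n ih =>
      refine Seg.trans (t n).2.1 (tm n.le_succ) ih ?_
      obtain ⟨i, hi⟩ := hc n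
      have hd : ∀ s ∈ Icc (t n : ℝ) (t (n + 1)), dist (g (t n)) (g s) < 2 * δ := by
        intro s hs
        have hs' : s ∈ Icc a b := ⟨(t n).2.1.trans hs.1, hs.2.trans (t (n + 1)).2.2⟩
        have h1 : dist (g s) (g i) < δ := Ud i s (hi (show (⟨s, hs'⟩ : Icc a b) ∈ _ from hs)) hs'
        have h2 : dist (g (t n)) (g i) < δ :=
          Ud i (t n) (hi (left_mem_Icc.2 (tm n.le_succ))) (t n).2
        have := dist_triangle_right (g (t n)) (g s) (g i)
        linarith
      rcases (tm n.le_succ : (t n : ℝ) ≤ t (n + 1)).eq_or_lt with h | h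
      · refine ⟨fun _ => g (t n), rfl, congrArg g (congrArg Subtype.val h), ?_, fun s _ => by simp [hδ']⟩
        intro s hs
        have := hd s hs
        exact mem_ball.2 (by linarith)
      · obtain ⟨C, hC, h1, h2, hCb⟩ := hU (g (t n)) (g (t (n + 1))) (hd _ (right_mem_Icc.2 h.le))
        refine (Seg.of_isPreconnected hδ' hC h1 h2 h).mono ?_
        intro s hs z hz
        have h3 := mem_ball.1 (hCb hz)
        have h4 := hd s hs
        have := dist_triangle z (g (t n)) (g s)
        exact mem_ball.2 (by linarith)
  have := H m
  rwa [hm m le_rfl] at this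

/-- `g` is a modification of `g₀` on `(0, c]` that has jumps less than `δ`, agrees with `g₀`
near `0`, and takes the value `y` at `c`. -/
structure Approx {Y : Type*} [MetricSpace Y] (g₀ : ℝ → Y) (c : ℝ) (y : Y) (δ : ℝ)
    (g : ℝ → Y) : Prop where
  jump : JumpLT δ (Ioc 0 c) g
  eq : ∃ a > 0, ∀ t ∈ Ioo 0 a, g t = g₀ t
  right : g c = y

lemma Approx.refine {Y : Type*} [MetricSpace Y] {δ ε δ' c : ℝ} (hδ' : 0 < δ') (hδ : 0 < δ)
    (hε : 0 < ε) (hc : 0 < c)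
    (hU : ∀ p q : Y, dist p q < 2 * δ →
      ∃ C : Set Y, IsPreconnected C ∧ p ∈ C ∧ q ∈ C ∧ C ⊆ ball p ε)
    {g₀ g : ℝ → Y} {y : Y}
    (h0 : ∀ ε > 0, ∃ a > 0, ∀ t ∈ Ioo 0 a, ∀ᶠ u in 𝓝 t, dist (g₀ u) (g₀ t) < ε)
    (hg : Approx g₀ c y δ g) :
    ∃ g', Approx g₀ c y δ' g' ∧ ∀ t ∈ Ioc 0 c, dist (g t) (g' t) ≤ ε + 2 * δ := by
  obtain ⟨a1, ha1, h1⟩ := hg.eq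
  obtain ⟨a2, ha2, h2⟩ := h0 δ' hδ'
  obtain ⟨b, hb0, hb⟩ : ∃ b, 0 < b ∧ b < min (min a1 a2) c :=
    exists_between (lt_min (lt_min ha1 ha2) hc)
  have hbc : b < c := hb.trans_le (min_le_right _ _)
  have hb1 : b < a1 := hb.trans_le ((min_le_left _ _).trans (min_le_left _ _))
  have hb2 : b < a2 := hb.trans_le ((min_le_left _ _).trans (min_le_right _ _))
  obtain ⟨f, fb, fc, fV, fJ⟩ := Seg.refine hδ' hδ hε hU hbc.le
    (hg.jump.mono fun t ht => ⟨hb0.trans_le ht.1, ht.2⟩)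
  refine ⟨fun t => if t ≤ b then g t else f t, ⟨?_, ⟨b, hb0, ?_⟩, ?_⟩, ?_⟩
  · refine JumpLT.glue ?_ (fJ.mono fun t ht => ⟨ht.2, ht.1.2⟩) fb.symm
    intro t ht
    have ht0 : 0 < t := ht.1.1
    have htb : t ≤ b := ht.2
    filter_upwards [nhdsWithin_le_nhds (h2 t ⟨ht0, by linarith⟩),
      nhdsWithin_le_nhds (Ioo_mem_nhds ht0 (htb.trans_lt hb1))] with u hu hu'
    rwa [h1 u hu', h1 t ⟨ht0, by linarith⟩]
  · intro t ht
    rw [if_pos ht.2.le]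
    exact h1 t ⟨ht.1, ht.2.trans hb1⟩
  · simp [not_le.2 hbc, fc, hg.right]
  · intro t ht
    by_cases h : t ≤ b
    · simp only [h, if_true, dist_self]
      positivity
    · simp only [h, if_false]
      have := fV t ⟨le_of_not_ge h, ht.2⟩
      rw [mem_ball, dist_comm] at this
      exact this.le

lemma exists_preconnected_of_dist_lt {Y : Type*} [MetricSpace Y] [CompactSpace Y]
    [LocallyConnectedSpace Y] {ε : ℝ} (hε : 0 < ε) :
    ∃ δ > 0, ∀ p q : Y, dist p q < δ →
      ∃ C : Set Y, IsPreconnected C ∧ p ∈ C ∧ q ∈ C ∧ C ⊆ ball p ε := by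
  have H : ∀ x : Y, ∃ V : Set Y, V ⊆ ball x (ε / 2) ∧ IsOpen V ∧ x ∈ V ∧ IsConnected V :=
    fun x => locallyConnectedSpace_iff_subsets_isOpen_isConnected.1 inferInstance x _
      (ball_mem_nhds x (half_pos hε))
  choose V Vb Vo Vm Vc using H
  obtain ⟨δ, hδ, hV⟩ := lebesgue_number_lemma_of_metric isCompact_univ Vo
    (fun x _ => mem_iUnion.2 ⟨x, Vm x⟩)
  refine ⟨δ, hδ, fun p q hpq => ?_⟩
  obtain ⟨i, hi⟩ := hV p trivial
  refine ⟨V i, (Vc i).isPreconnected, hi (mem_ball_self hδ),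
    hi (by rwa [mem_ball, dist_comm]), fun z hz => ?_⟩
  have h1 := mem_ball.1 (Vb i hz)
  have h2 := mem_ball.1 (Vb i (hi (mem_ball_self hδ)))
  have := dist_triangle_right z p i
  exact mem_ball.2 (by linarith)

/-- A function into a Peano continuum whose jumps tend to `0` at `0` is asymptotic at `0` to a
continuous function on `(0, c]` with prescribed value at `c`. The continuous function is a
uniform limit of modifications with smaller and smaller jumps. -/
theorem exists_continuousOn_asymptotic {Y : Type*} [MetricSpace Y] [CompactSpace Y]
    [ConnectedSpace Y] [LocallyConnectedSpace Y] (g₀ : ℝ → Y) {c : ℝ} (hc : 0 < c) (y : Y)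
    (h0 : ∀ ε > 0, ∃ a > 0, ∀ t ∈ Ioo 0 a, ∀ᶠ u in 𝓝 t, dist (g₀ u) (g₀ t) < ε) :
    ∃ g : ℝ → Y, ContinuousOn g (Ioc 0 c) ∧ g c = y ∧
      ∀ ε > 0, ∃ a > 0, ∀ t ∈ Ioo 0 a, dist (g t) (g₀ t) < ε := by
  have hη : ∀ n : ℕ, (0 : ℝ) < (1 / 2) ^ n := fun n => by positivity
  have hδ : ∀ n : ℕ, ∃ δ : ℝ, 0 < δ ∧ δ ≤ (1 / 2) ^ n ∧ ∀ p q : Y, dist p q < 2 * δ →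
      ∃ C : Set Y, IsPreconnected C ∧ p ∈ C ∧ q ∈ C ∧ C ⊆ ball p ((1 / 2) ^ n) := by
    intro n
    obtain ⟨δ, hδ, h⟩ := exists_preconnected_of_dist_lt (Y := Y) (hη n)
    refine ⟨min (δ / 2) ((1 / 2) ^ n), lt_min (half_pos hδ) (hη n), min_le_right _ _, ?_⟩
    intro p q hpq
    refine h p q (hpq.trans_le ?_)
    have := min_le_left (δ / 2) ((1 / 2 : ℝ) ^ n)
    linarith
  choose δ δ0 δle hU using hδ
  -- The first step uses the connectedness of the whole space at a scale beyond its diameter.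
  have hbd : ∀ p q : Y, dist p q < diam (univ : Set Y) + 1 := fun p q =>
    (dist_le_diam_of_mem isCompact_univ.isBounded (mem_univ p) (mem_univ q)).trans_lt
      (lt_add_one _)
  have hD : 0 < diam (univ : Set Y) + 1 := by positivity
  obtain ⟨f0, hf0, -⟩ := Approx.refine (δ0 0) hD hD hc
    (fun p q _ => ⟨univ, isPreconnected_univ, trivial, trivial, fun z _ => hbd z p⟩) h0
    (g := fun t => if t < c then g₀ t else y) (y := y)
    ⟨fun t _ => Eventually.of_forall fun u => hbd _ _,
      ⟨c, hc, fun t ht => if_pos ht.2⟩, if_neg (lt_irrefl c)⟩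
  have hstep : ∀ (n : ℕ) (g : ℝ → Y), ∃ g' : ℝ → Y, Approx g₀ c y (δ n) g →
      Approx g₀ c y (δ (n + 1)) g' ∧ ∀ t ∈ Ioc 0 c, dist (g t) (g' t) ≤ 3 * (1 / 2) ^ n := by
    intro n g
    by_cases hg : Approx g₀ c y (δ n) g
    · obtain ⟨g', h1, h2⟩ := Approx.refine (δ0 (n + 1)) (δ0 n) (hη n) hc (hU n) h0 hg
      refine ⟨g', fun _ => ⟨h1, fun t ht => (h2 t ht).trans ?_⟩⟩
      have := δle n
      linarith
    · exact ⟨g, fun h => absurd h hg⟩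
  choose step hstep using hstep
  let G : ℕ → ℝ → Y := fun n => Nat.rec f0 (fun n g => step n g) n
  have hG : ∀ n, Approx g₀ c y (δ n) (G n) := by
    intro n
    induction n with
    | zero => exact hf0
    | succ n ih => exact (hstep n _ ih).1
  have hGd : ∀ t ∈ Ioc 0 c, ∀ n, dist (G n t) (G (n + 1) t) ≤ 3 * (1 / 2) ^ n :=
    fun t ht n => (hstep n _ (hG n)).2 t ht
  have hlim : ∀ t, ∃ z, t ∈ Ioc 0 c → Tendsto (fun n => G n t) atTop (𝓝 z) := by
    intro t
    by_cases ht : t ∈ Ioc 0 c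
    · obtain ⟨z, hz⟩ := cauchySeq_tendsto_of_complete
        (cauchySeq_of_le_geometric (1 / 2) 3 (by norm_num) (hGd t ht))
      exact ⟨z, fun _ => hz⟩
    · exact ⟨y, fun h => absurd h ht⟩
  choose g hg using hlim
  have hgd : ∀ t ∈ Ioc 0 c, ∀ n, dist (G n t) (g t) ≤ 6 * (1 / 2) ^ n := by
    intro t ht n
    have := dist_le_of_le_geometric_of_tendsto (1 / 2) 3 (by norm_num) (hGd t ht) (hg t ht) n
    calc _ ≤ _ := this
      _ = _ := by ring
  have hsmall : ∀ ε > 0, ∃ n : ℕ, (1 / 2 : ℝ) ^ n < ε :=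
    fun ε hε => exists_pow_lt_of_lt_one hε (by norm_num)
  refine ⟨g, ?_, ?_, ?_⟩
  · intro t ht
    refine Metric.tendsto_nhds.2 fun ε hε => ?_
    obtain ⟨n, hn⟩ := hsmall (ε / 13) (by positivity)
    filter_upwards [(hG n).jump t ht, self_mem_nhdsWithin] with u hu hu'
    have h1 := hgd t ht n
    have h2 := hgd u hu' n
    have h3 := δle n
    have h4 := dist_triangle4 (g u) (G n u) (G n t) (g t)
    rw [dist_comm (g u) (G n u)] at h4
    linarith
  · refine tendsto_nhds_unique (hg c ⟨hc, le_rfl⟩) ?_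
    simp only [(hG _).right]
    exact tendsto_const_nhds
  · intro ε hε
    obtain ⟨n, hn⟩ := hsmall (ε / 6) (by positivity)
    obtain ⟨a, ha, h⟩ := (hG n).eq
    refine ⟨min a c, lt_min ha hc, fun t ht => ?_⟩
    rw [← h t ⟨ht.1, ht.2.trans_le (min_le_left _ _)⟩, dist_comm]
    have := hgd t ⟨ht.1, (ht.2.trans_le (min_le_right _ _)).le⟩ n
    linarith

/-! ### A locally connected continuum with a ray winding onto it -/

lemma Set.OrdConnected.locallyConnectedSpace {S : Set ℝ} (hS : S.OrdConnected) :
    LocallyConnectedSpace S := by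
  refine locallyConnectedSpace_iff_connected_subsets.2 fun x U hU => ?_
  obtain ⟨ε, hε, h⟩ := Metric.mem_nhds_iff.1 hU
  refine ⟨ball x ε, ball_mem_nhds x hε, ?_, h⟩
  have h1 : (Subtype.val '' ball x ε : Set ℝ) = S ∩ ball (x : ℝ) ε := by
    ext t
    constructor
    · rintro ⟨t, ht, rfl⟩
      exact ⟨t.2, ht⟩
    · rintro ⟨h1, h2⟩
      exact ⟨⟨t, h1⟩, h2, rfl⟩
  rw [← IsInducing.subtypeVal.isPreconnected_image, h1, Real.ball_eq_Ioo]
  exact (hS.inter ordConnected_Ioo).isPreconnected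

/-- A description of `X` as `L` together with a one-to-one curve `h` on `(0, 1]` such that
`h 1` is a point of `L`, the open arc `h '' (0, 1)` is a free interval complementary to `L`,
and the set of limit points of `h t` as `t → 0` is exactly `L`. -/
structure RayModel {X : Type*} [TopologicalSpace X] (L : Set X) (h : ℝ → X) : Prop where
  cont : ContinuousOn h (Ioc 0 1)
  inj : InjOn h (Ioc 0 1)
  one_mem : h 1 ∈ L
  notMem : ∀ t ∈ Ioo (0 : ℝ) 1, h t ∉ L
  cover : ∀ x, x ∈ L ∨ ∃ t ∈ Ioo (0 : ℝ) 1, h t = x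
  isOpen : ∀ U ⊆ Ioo (0 : ℝ) 1, IsOpen U → IsOpen (h '' U)
  near : ∀ U, IsOpen U → L ⊆ U → ∃ a > 0, ∀ t ∈ Ioo 0 a, h t ∈ U
  acc : ∀ p ∈ L, ∀ U, IsOpen U → p ∈ U → ∀ ε > 0, ∃ t ∈ Ioo (0 : ℝ) 1, t < ε ∧ h t ∈ U

namespace RayModel

variable {X : Type*} [TopologicalSpace X] {L : Set X} {h : ℝ → X}

lemma isCompact_image (m : RayModel L h) {a b : ℝ} (ha : 0 < a) (hb : b ≤ 1) :
    IsCompact (h '' Icc a b) :=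
  isCompact_Icc.image_of_continuousOn
    (m.cont.mono fun _ ht => ⟨ha.trans_le ht.1, ht.2.trans hb⟩)

lemma isOpen_image (m : RayModel L h) {a b : ℝ} (ha : 0 ≤ a) (hb : b ≤ 1) :
    IsOpen (h '' Ioo a b) :=
  m.isOpen _ (Ioo_subset_Ioo ha hb) isOpen_Ioo

lemma isClosed_union (m : RayModel L h) {s : ℝ} (hs : s ∈ Ioo (0 : ℝ) 1) :
    IsClosed (L ∪ h '' Icc s 1) := by
  have : L ∪ h '' Icc s 1 = (h '' Ioo 0 s)ᶜ := by
    ext x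
    constructor
    · rintro (hx | ⟨t, ht, rfl⟩) ⟨u, hu, hux⟩
      · exact m.notMem u ⟨hu.1, hu.2.trans hs.2⟩ (hux ▸ hx)
      · have := m.inj ⟨hu.1, (hu.2.trans hs.2).le⟩ ⟨hs.1.trans_le ht.1, ht.2⟩ hux
        exact absurd hu.2 (not_lt.2 (this ▸ ht.1))
    · intro hx
      rcases m.cover x with hxL | ⟨t, ht, rfl⟩
      · exact Or.inl hxL
      · refine Or.inr ⟨t, ⟨?_, ht.2.le⟩, rfl⟩
        by_contra hts
        exact hx ⟨t, ⟨ht.1, not_le.1 hts⟩, rfl⟩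
  rw [this]
  exact (m.isOpen_image le_rfl hs.2.le).isClosed_compl

/-- Locally connected images cannot follow the ray to its oscillating end: a connected set
near a point `p ∈ L` misses a sequence of points of the ray close to another point of `L`,
and these cut off the rest of the ray. -/
lemma eventually_notMem [T2Space X] (m : RayModel L h) (hL : L.Nontrivial) {K : Type*}
    [TopologicalSpace K] [LocallyConnectedSpace K] {φ : K → X} (hφ : Continuous φ) (k : K) :
    ∃ s ∈ Ioo (0 : ℝ) 1, ∀ᶠ k' in 𝓝 k, φ k' ∉ h '' Ioo 0 s := by
  rcases m.cover (φ k) with hp | ⟨t, ht, htk⟩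
  · obtain ⟨q, hq, hqp⟩ := hL.exists_ne (φ k)
    obtain ⟨U, V, hU, hV, hpU, hqV, hUV⟩ := t2_separation hqp.symm
    obtain ⟨C, hCU, hCo, hkC, hCc⟩ := locallyConnectedSpace_iff_subsets_isOpen_isConnected.1
      ‹_› k (φ ⁻¹' U) (hφ.continuousAt.preimage_mem_nhds (hU.mem_nhds hpU))
    obtain ⟨r, hr, -, hrV⟩ := m.acc q hq V hV hqV 1 one_pos
    refine ⟨r, hr, ?_⟩
    filter_upwards [hCo.mem_nhds hkC]
    rintro c hc ⟨t, ht, htc⟩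
    obtain ⟨r', hr', hr't, hr'V⟩ := m.acc q hq V hV hqV t ht.1
    obtain ⟨c', hc', h1, h2⟩ := hCc.isPreconnected (φ ⁻¹' (h '' Ioo r' r))
      (φ ⁻¹' (h '' Icc r' r)ᶜ) ((m.isOpen_image hr'.1.le hr.2.le).preimage hφ)
      ((m.isCompact_image hr'.1 hr.2.le).isClosed.isOpen_compl.preimage hφ)
      (by
        intro c' hc'
        by_cases hx : φ c' ∈ h '' Icc r' r
        · left
          obtain ⟨u, hu, huc⟩ := hx
          have hne : ∀ v, h v ∈ V → u ≠ v := by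
            rintro v hv rfl
            exact hUV.le_bot ⟨hCU hc', huc ▸ hv⟩
          exact ⟨u, ⟨lt_of_le_of_ne hu.1 (hne r' hr'V).symm, lt_of_le_of_ne hu.2 (hne r hrV)⟩, huc⟩
        · exact Or.inr hx)
      ⟨c, hc, t, ⟨hr't, ht.2⟩, htc⟩
      ⟨k, hkC, by
        rintro ⟨u, hu, huk⟩
        exact m.notMem u ⟨hr'.1.trans_le hu.1, hu.2.trans_lt hr.2⟩ (huk ▸ hp)⟩
    exact h2 (image_mono Ioo_subset_Icc_self h1)
  · refine ⟨t / 2, ⟨half_pos ht.1, (half_lt_self ht.1).trans ht.2⟩, ?_⟩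
    have hO := m.isOpen_image (a := t / 2) (b := 1) (half_pos ht.1).le le_rfl
    filter_upwards [hφ.continuousAt.preimage_mem_nhds
      (hO.mem_nhds ⟨t, ⟨half_lt_self ht.1, ht.2⟩, htk⟩)]
    rintro k' ⟨u, hu, huk⟩ ⟨v, hv, hvk⟩
    have := m.inj ⟨(half_pos ht.1).trans hu.1, hu.2.le⟩
      ⟨hv.1, (hv.2.trans ((half_lt_self ht.1).trans ht.2)).le⟩ (huk.trans hvk.symm)
    exact absurd (this ▸ hu.1) (not_lt.2 hv.2.le)

lemma exists_notMem [T2Space X] (m : RayModel L h) (hL : L.Nontrivial) {K : Type*}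
    [TopologicalSpace K] [CompactSpace K] [LocallyConnectedSpace K] {φ : K → X}
    (hφ : Continuous φ) : ∃ s ∈ Ioo (0 : ℝ) 1, ∀ k, φ k ∉ h '' Ioo 0 s := by
  have := isCompact_univ.induction_on (X := K)
    (p := fun S => ∃ s ∈ Ioo (0 : ℝ) 1, ∀ k ∈ S, φ k ∉ h '' Ioo 0 s)
    ⟨1 / 2, by norm_num, fun _ hk => absurd hk (notMem_empty _)⟩
    (fun S T hST ⟨s, hs, hT⟩ => ⟨s, hs, fun k hk => hT k (hST hk)⟩)
    (fun S T ⟨s, hs, hS⟩ ⟨t, ht, hT⟩ => ⟨min s t, ⟨lt_min hs.1 ht.1, (min_le_left _ _).trans_lt hs.2⟩,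
      fun k hk hm => hk.elim
        (fun hk => hS k hk (image_mono (Ioo_subset_Ioo_right (min_le_left _ _)) hm))
        (fun hk => hT k hk (image_mono (Ioo_subset_Ioo_right (min_le_right _ _)) hm))⟩)
    (fun k _ => by
      obtain ⟨s, hs, hk⟩ := m.eventually_notMem hL hφ k
      exact ⟨_, nhdsWithin_le_nhds hk, s, hs, fun k' hk' => hk'⟩)
  obtain ⟨s, hs, hk⟩ := this
  exact ⟨s, hs, fun k => hk k trivial⟩

/-- The part of `X` outside a neighbourhood of the oscillating end is a retract: the removed
half-open arc runs back along the ray to `h 1 ∈ L` and then follows `h t` inside `L`. -/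
lemma exists_retraction [CompactSpace X] [TopologicalSpace.MetrizableSpace X]
    (m : RayModel L h) (hLc : IsCompact L) (hLcon : IsConnected L)
    (hLl : LocallyConnectedSpace L) {s : ℝ} (hs : s ∈ Ioo (0 : ℝ) 1) :
    ∃ r : X → X, Continuous r ∧ (∀ x, r x ∈ L ∪ h '' Icc s 1) ∧
      ∀ x ∈ L ∪ h '' Icc s 1, r x = x := by
  let := TopologicalSpace.metrizableSpaceMetric X
  have hs0 : 0 < s := hs.1
  have : CompactSpace L := isCompact_iff_compactSpace.1 hLc
  have : ConnectedSpace L := isConnected_iff_connectedSpace.1 hLcon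
  have hπ : ∀ x : X, ∃ p : L, infDist x L = dist x p := fun x => by
    obtain ⟨p, hp, h⟩ := hLc.exists_infDist_eq_dist hLcon.nonempty x
    exact ⟨⟨p, hp⟩, h⟩
  choose π hπ using hπ
  have hnear : ∀ ε > 0, ∃ a > 0, a ≤ 1 ∧ ∀ t ∈ Ioo 0 a, dist (h t) (π (h t)) < ε := by
    intro ε hε
    obtain ⟨a, ha, H⟩ := m.near (thickening ε L) isOpen_thickening (self_subset_thickening hε L)
    refine ⟨min a 1, lt_min ha one_pos, min_le_right _ _, fun t ht => ?_⟩
    rw [← hπ]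
    exact (mem_thickening_iff_infDist_lt hLcon.nonempty).1
      (H t ⟨ht.1, ht.2.trans_le (min_le_left _ _)⟩)
  have hcontAt : ∀ t ∈ Ioo (0 : ℝ) 1, ContinuousAt h t := fun t ht =>
    m.cont.continuousAt (Filter.mem_of_superset (Ioo_mem_nhds ht.1 ht.2) Ioo_subset_Ioc_self)
  obtain ⟨g, hg, hg1, hgh⟩ := exists_continuousOn_asymptotic (fun t => π (h t))
    (half_pos hs0) ⟨h 1, m.one_mem⟩ (by
      intro ε hε
      obtain ⟨a, ha, ha1, H⟩ := hnear (ε / 4) (by positivity)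
      refine ⟨a, ha, fun t ht => ?_⟩
      filter_upwards [Ioo_mem_nhds ht.1 ht.2,
        Metric.tendsto_nhds.1 (hcontAt t ⟨ht.1, ht.2.trans_le ha1⟩) (ε / 4) (by positivity)]
        with u hu hut
      have h1 := H t ht
      have h2 := H u hu
      have h3 := dist_triangle4 (π (h u) : X) (h u) (h t) (π (h t))
      rw [dist_comm (π (h u) : X) (h u)] at h3
      change dist (π (h u) : X) (π (h t)) < ε
      linarith)
  have hasym : ∀ ε > 0, ∃ a > 0, ∀ t ∈ Ioo 0 a, dist (g t : X) (h t) < ε := by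
    intro ε hε
    obtain ⟨a, ha, -, H⟩ := hnear (ε / 2) (by positivity)
    obtain ⟨b, hb, H'⟩ := hgh (ε / 2) (by positivity)
    refine ⟨min a b, lt_min ha hb, fun t ht => ?_⟩
    have h1 := H t ⟨ht.1, ht.2.trans_le (min_le_left _ _)⟩
    have h2 := H' t ⟨ht.1, ht.2.trans_le (min_le_right _ _)⟩
    have h3 := dist_triangle_right (g t : X) (h t) (π (h t))
    change dist (g t : X) (π (h t)) < ε / 2 at h2
    linarith
  -- The affine map sends `[s / 2, s]` onto `[s, 1]`, reversing the orientation.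
  let α : ℝ → ℝ := fun t => 1 - (2 * t / s - 1) * (1 - s)
  have hα1 : α (s / 2) = 1 := by simp only [α]; field_simp; ring
  have hαs : α s = s := by simp only [α]; field_simp; ring
  have hαc : Continuous α := by simp only [α]; fun_prop
  have hαI : ∀ t ∈ Icc (s / 2) s, α t ∈ Icc s 1 := by
    intro t ht
    have h1 : 1 ≤ 2 * t / s := by rw [le_div_iff₀ hs0]; linarith [ht.1]
    have h2 : 2 * t / s ≤ 2 := by rw [div_le_iff₀ hs0]; linarith [ht.2]
    have h3 : s < 1 := hs.2
    constructor <;> simp only [α] <;> nlinarith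
  let γ : ℝ → X := fun t => if t ≤ s / 2 then (g t : X) else h (α t)
  have hγs : γ s = h s := by
    simp only [γ, if_neg (not_le.2 (half_lt_self hs0)), hαs]
  have hγP : ∀ t ∈ Ioc 0 s, γ t ∈ L ∪ h '' Icc s 1 := by
    intro t ht
    by_cases h' : t ≤ s / 2
    · simp only [γ, if_pos h']
      exact Or.inl (g t).2
    · simp only [γ, if_neg h']
      exact Or.inr ⟨_, hαI t ⟨(not_le.1 h').le, ht.2⟩, rfl⟩
  have hγc : ContinuousOn γ (Ioc 0 s) := by
    refine ContinuousOn.if ?_ ?_ ?_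
    · intro t ht
      have : t ∈ frontier (Iic (s / 2)) := ht.2
      rw [frontier_Iic, mem_singleton_iff] at this
      rw [this, hg1, hα1]
    · refine continuous_subtype_val.comp_continuousOn (hg.mono ?_)
      intro t ht
      have : t ∈ closure (Iic (s / 2)) := ht.2
      rw [closure_Iic] at this
      exact ⟨ht.1.1, this⟩
    · refine m.cont.comp hαc.continuousOn ?_
      intro t ht
      have : t ∈ closure (Ioi (s / 2)) := by
        have := ht.2
        simp only [not_le] at this
        exact this
      rw [closure_Ioi] at this
      have := hαI t ⟨this, ht.1.2⟩
      exact ⟨hs0.trans_le this.1, this.2⟩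
  let τ : X → ℝ := Function.invFunOn h (Ioc 0 1)
  have hτ : ∀ t ∈ Ioc (0 : ℝ) 1, τ (h t) = t := fun t ht => m.inj.leftInvOn_invFunOn ht
  classical
  let r : X → X := fun x => if x ∈ h '' Ioo 0 s then γ (τ x) else x
  have hrP : ∀ x ∈ L ∪ h '' Icc s 1, r x = x := by
    intro x hx
    refine if_neg ?_
    rintro ⟨u, hu, rfl⟩
    rcases hx with hx | ⟨t, ht, htu⟩
    · exact m.notMem u ⟨hu.1, hu.2.trans hs.2⟩ hx
    · have := m.inj ⟨hs0.trans_le ht.1, ht.2⟩ ⟨hu.1, (hu.2.trans hs.2).le⟩ htu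
      exact absurd hu.2 (not_lt.2 (this ▸ ht.1))
  have hrγ : ∀ t ∈ Ioc 0 s, r (h t) = γ t := by
    intro t ht
    rcases ht.2.lt_or_eq with h' | h'
    · simp only [r]
      rw [if_pos ⟨t, ⟨ht.1, h'⟩, rfl⟩, hτ t ⟨ht.1, ht.2.trans hs.2.le⟩]
    · subst h'
      rw [hγs]
      exact hrP _ (Or.inr ⟨t, ⟨le_rfl, hs.2.le⟩, rfl⟩)
  refine ⟨r, ?_, ?_, hrP⟩
  · have hBclosed : IsClosed (L ∪ h '' Ioc 0 s) := by
      have : L ∪ h '' Ioc 0 s = (h '' Ioo s 1)ᶜ := by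
        ext x
        constructor
        · rintro (hx | ⟨t, ht, rfl⟩) ⟨u, hu, hux⟩
          · exact m.notMem u ⟨hs0.trans hu.1, hu.2⟩ (hux ▸ hx)
          · have := m.inj ⟨hs0.trans hu.1, hu.2.le⟩ ⟨ht.1, ht.2.trans hs.2.le⟩ hux
            exact absurd hu.1 (not_lt.2 (this ▸ ht.2))
        · intro hx
          rcases m.cover x with hxL | ⟨t, ht, rfl⟩
          · exact Or.inl hxL
          · refine Or.inr ⟨t, ⟨ht.1, ?_⟩, rfl⟩
            by_contra hts
            exact hx ⟨t, ⟨not_le.1 hts, ht.2⟩, rfl⟩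
      rw [this]
      exact (m.isOpen_image hs0.le le_rfl).isClosed_compl
    have hcov : (L ∪ h '' Icc s 1) ∪ (L ∪ h '' Ioc 0 s) = univ := by
      refine eq_univ_of_forall fun x => ?_
      rcases m.cover x with hxL | ⟨t, ht, rfl⟩
      · exact Or.inl (Or.inl hxL)
      · rcases le_total s t with h' | h'
        · exact Or.inl (Or.inr ⟨t, ⟨h', ht.2.le⟩, rfl⟩)
        · exact Or.inr (Or.inr ⟨t, ⟨ht.1, h'⟩, rfl⟩)
    rw [← continuousOn_univ, ← hcov]
    refine ContinuousOn.union_of_isClosed (continuousOn_id.congr hrP) ?_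
      (m.isClosed_union hs) hBclosed
    rintro x (hx | ⟨t, ht, rfl⟩)
    · refine Metric.tendsto_nhds.2 fun ε hε => ?_
      obtain ⟨a, ha, H⟩ := hasym (ε / 2) (by positivity)
      let b := min a (s / 2)
      have hb : 0 < b := lt_min ha (half_pos hs0)
      have hxb : x ∉ h '' Icc b s := by
        rintro ⟨u, hu, rfl⟩
        exact m.notMem u ⟨hb.trans_le hu.1, hu.2.trans_lt hs.2⟩ hx
      rw [hrP x (Or.inl hx)]
      filter_upwards [nhdsWithin_le_nhds (ball_mem_nhds x (half_pos hε)),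
        nhdsWithin_le_nhds
          ((m.isCompact_image hb hs.2.le).isClosed.isOpen_compl.mem_nhds hxb),
        self_mem_nhdsWithin] with z hz hzb hzB
      rcases hzB with hzL | ⟨t, ht, rfl⟩
      · rw [hrP z (Or.inl hzL)]
        exact (mem_ball.1 hz).trans (half_lt_self hε)
      · have htb : t < b := by
          by_contra hcon
          exact hzb ⟨t, ⟨not_lt.1 hcon, ht.2⟩, rfl⟩
        have h1 : r (h t) = g t := by
          rw [hrγ t ht]
          exact if_pos (htb.le.trans (min_le_right _ _))
        rw [h1]
        have h2 := H t ⟨ht.1, htb.trans_le (min_le_left _ _)⟩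
        have h3 := dist_triangle (g t : X) (h t) x
        have h4 := mem_ball.1 hz
        linarith
    · intro V hV
      rw [hrγ t ht] at hV
      have h1 := mem_nhdsWithin.1 (hγc t ht hV)
      obtain ⟨U, hU, htU, hUV⟩ := h1
      have ht1 : t < 1 := ht.2.trans_lt hs.2
      have hO := m.isOpen (U ∩ Ioo 0 1) inter_subset_right (hU.inter isOpen_Ioo)
      refine mem_nhdsWithin.2 ⟨_, hO, ⟨t, ⟨htU, ht.1, ht1⟩, rfl⟩, ?_⟩
      rintro x ⟨⟨u, ⟨huU, hu⟩, rfl⟩, hxB⟩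
      have hus : u ∈ Ioc 0 s := by
        rcases hxB with hx | ⟨v, hv, hvu⟩
        · exact absurd hx (m.notMem u hu)
        · rwa [← m.inj ⟨hv.1, hv.2.trans hs.2.le⟩ ⟨hu.1, hu.2.le⟩ hvu]
      change r (h u) ∈ V
      rw [hrγ u hus]
      exact hUV ⟨huU, hus⟩
  · intro x
    by_cases hx : x ∈ h '' Ioo 0 s
    · obtain ⟨t, ht, rfl⟩ := hx
      rw [hrγ t ⟨ht.1, ht.2.le⟩]
      exact hγP t ⟨ht.1, ht.2.le⟩
    · have hx' : x ∈ L ∪ h '' Icc s 1 := by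
        rcases m.cover x with hxL | ⟨t, ht, rfl⟩
        · exact Or.inl hxL
        · refine Or.inr ⟨t, ⟨?_, ht.2.le⟩, rfl⟩
          by_contra hts
          exact hx ⟨t, ⟨ht.1, not_le.1 hts⟩, rfl⟩
      rwa [hrP x hx']

/-- A minimal set stays away from the oscillating end of the ray. Otherwise `F` would map a
piece of the ray near this end into the ray, so that `F` would map `L` into `L` by density,
and `M ∩ L` would be a proper invariant closed subset of `M`. -/
lemma minimal_avoids_end [T2Space X] (m : RayModel L h) (hL : L.Nontrivial)
    (hLc : IsCompact L) (hLl : LocallyConnectedSpace L) {F : X → X} (hF : Continuous F)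
    {M : Set X} (hMc : IsCompact M) (hM : MinimalSystemOn F M) :
    ∃ s ∈ Ioo (0 : ℝ) 1, ∀ t ∈ Ioo 0 s, h t ∉ M := by
  by_contra! hne
  have : CompactSpace L := isCompact_iff_compactSpace.1 hLc
  obtain ⟨s₁, hs₁, hFL⟩ := m.exists_notMem hL (hF.comp (continuous_subtype_val (p := (· ∈ L))))
  obtain ⟨s₀, hs₀, hs₀₁⟩ : ∃ s₀, 0 < s₀ ∧ s₀ < s₁ := exists_between hs₁.1
  have hs₀1 : s₀ < 1 := hs₀₁.trans hs₁.2
  obtain ⟨a, ha, hFa⟩ := m.near (F ⁻¹' {h s₀}ᶜ) (isOpen_compl_singleton.preimage hF)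
    (fun x hx hxs => hFL ⟨x, hx⟩ ⟨s₀, ⟨hs₀, hs₀₁⟩, (mem_singleton_iff.1 hxs).symm⟩)
  obtain ⟨ε, hε, hεa⟩ : ∃ ε, 0 < ε ∧ ε < min a 1 := exists_between (lt_min ha one_pos)
  have hε1 : ε < 1 := hεa.trans_le (min_le_right _ _)
  have hFs : ∀ t ∈ Ioo 0 ε, F (h t) ≠ h s₀ := fun t ht =>
    hFa t ⟨ht.1, ht.2.trans (hεa.trans_le (min_le_left _ _))⟩
  have : LocallyConnectedSpace (Icc ε 1) := ordConnected_Icc.locallyConnectedSpace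
  obtain ⟨s₂, hs₂, hFε⟩ := m.exists_notMem hL (K := Icc ε 1) (φ := fun t => F (h t))
    (hF.comp (m.cont.mono fun t ht => ⟨hε.trans_le ht.1, ht.2⟩).domRestrict)
  let G : Ioo 0 ε → X := fun t => F (h t)
  have hG : Continuous G :=
    hF.comp (m.cont.mono fun t ht => ⟨ht.1, (ht.2.trans hε1).le⟩).domRestrict
  have : LocallyConnectedSpace (Ioo 0 ε) := ordConnected_Ioo.locallyConnectedSpace
  have hclopen : IsClopen (G ⁻¹' (h '' Ioo 0 s₀)) := by
    refine ⟨⟨?_⟩, (m.isOpen_image le_rfl hs₀1.le).preimage hG⟩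
    rw [isOpen_iff_mem_nhds]
    intro t ht
    obtain ⟨s₃, hs₃, hev⟩ := m.eventually_notMem hL hG t
    have ht' : G t ∉ h '' Icc s₃ s₀ := by
      rintro ⟨u, hu, hut⟩
      rcases hu.2.lt_or_eq with h' | h'
      · exact ht ⟨u, ⟨hs₃.1.trans_le hu.1, h'⟩, hut⟩
      · exact hFs t t.2 (by rw [← h', hut])
    filter_upwards [hev, hG.continuousAt.preimage_mem_nhds
      ((m.isCompact_image hs₃.1 hs₀1.le).isClosed.isOpen_compl.mem_nhds ht')]
    rintro t' h1 h2 ⟨u, hu, hut⟩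
    rcases lt_or_ge u s₃ with h' | h'
    · exact h1 ⟨u, ⟨hu.1, h'⟩, hut⟩
    · exact h2 ⟨u, ⟨h', hu.2.le⟩, hut⟩
  have hGne : (G ⁻¹' (h '' Ioo 0 s₀)).Nonempty := by
    obtain ⟨t, ht, htM⟩ := hne (min s₀ s₂)
      ⟨lt_min hs₀ hs₂.1, (min_le_left _ _).trans_lt hs₀1⟩
    have ht0 : t < s₀ := ht.2.trans_le (min_le_left _ _)
    have ht2 : t < s₂ := ht.2.trans_le (min_le_right _ _)
    rw [← hM.2.1] at htM
    obtain ⟨z, -, hzt⟩ := htM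
    rcases m.cover z with hz | ⟨t', ht', rfl⟩
    · exact absurd ⟨t, ⟨ht.1, ht0.trans hs₀₁⟩, hzt.symm⟩ (hFL ⟨z, hz⟩)
    · have : t' < ε := by
        by_contra hcon
        exact hFε ⟨t', not_lt.1 hcon, ht'.2.le⟩ ⟨t, ⟨ht.1, ht2⟩, hzt.symm⟩
      exact ⟨⟨t', ht'.1, this⟩, t, ⟨ht.1, ht0⟩, hzt.symm⟩
  have : PreconnectedSpace (Ioo 0 ε) := isPreconnected_iff_preconnectedSpace.1 isPreconnected_Ioo
  have hGuniv := hclopen.eq_univ hGne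
  have hLL : ∀ x ∈ L, F x ∈ L := by
    intro x hx
    by_contra hFx
    obtain ⟨u, hu, hux⟩ := (m.cover (F x)).resolve_left hFx
    have hus : s₁ ≤ u := by
      by_contra hcon
      exact hFL ⟨x, hx⟩ ⟨u, ⟨hu.1, not_le.1 hcon⟩, hux⟩
    obtain ⟨t, ht, htε, v, hv, hvt⟩ := m.acc x hx (F ⁻¹' (h '' Ioo s₀ 1))
      ((m.isOpen_image hs₀.le le_rfl).preimage hF) ⟨u, ⟨hs₀₁.trans_le hus, hu.2⟩, hux⟩ ε hε
    obtain ⟨w, hw, hwt⟩ : (⟨t, ht.1, htε⟩ : Ioo 0 ε) ∈ G ⁻¹' (h '' Ioo 0 s₀) := by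
      rw [hGuniv]; trivial
    have := m.inj ⟨hs₀.trans hv.1, hv.2.le⟩ ⟨hw.1, (hw.2.trans hs₀1).le⟩ (hvt.trans hwt.symm)
    exact absurd (this ▸ hv.1) (not_lt.2 hw.2.le)
  have hNne : (M ∩ L).Nonempty := by
    by_contra hemp
    obtain ⟨b, hb, hbM⟩ := m.near Mᶜ hMc.isClosed.isOpen_compl
      (fun x hx hxM => hemp ⟨x, hxM, hx⟩)
    obtain ⟨t, ht, htM⟩ := hne (min b (1 / 2))
      ⟨lt_min hb (by norm_num), (min_le_right _ _).trans_lt (by norm_num)⟩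
    exact hbM t ⟨ht.1, ht.2.trans_le (min_le_left _ _)⟩ htM
  have hN := hM.2.2 (M ∩ L) inter_subset_left hNne (hMc.isClosed.inter hLc.isClosed) (by
    rintro _ ⟨x, hx, rfl⟩
    exact ⟨hM.2.1 ▸ mem_image_of_mem F hx.1, hLL x hx.2⟩)
  obtain ⟨t, ht, htM⟩ := hne (1 / 2) (by norm_num)
  rw [← hN] at htM
  exact m.notMem t ⟨ht.1, ht.2.trans (by norm_num)⟩ htM.2

lemma isArc_image [T2Space X] (m : RayModel L h) {s : ℝ} (hs : s ∈ Ioo (0 : ℝ) 1) :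
    IsArc (h '' Icc s 1) := by
  have hsub : Icc s 1 ⊆ Ioc 0 1 := fun t ht => ⟨hs.1.trans_le ht.1, ht.2⟩
  have hc : Continuous ((Icc s 1).domRestrict h) := (m.cont.mono hsub).domRestrict
  have hi : Function.Injective ((Icc s 1).domRestrict h) := (m.inj.mono hsub).injective
  have he := hc.isClosedEmbedding hi
  have e1 : Icc s 1 ≃ₜ range ((Icc s 1).domRestrict h) := he.isEmbedding.toHomeomorph
  rw [range_domRestrict] at e1
  exact ⟨e1.symm.trans (iccHomeoI s 1 hs.2)⟩

/-- The arcs in `{h 1} ∪ h '' (0, 1)` through `h 1` are exactly the sets `h '' [s, 1]`. -/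
lemma arc_eq [T2Space X] (m : RayModel L h) (hL : L.Nontrivial) {A : Set X} (hA : IsArc A)
    (h1A : h 1 ∈ A) (hAJ : ∀ x ∈ A, x = h 1 ∨ ∃ t ∈ Ioo (0 : ℝ) 1, h t = x) :
    ∃ s ∈ Ioo (0 : ℝ) 1, A = h '' Icc s 1 := by
  obtain ⟨e⟩ := hA
  have : CompactSpace A := e.symm.compactSpace
  have : LocallyConnectedSpace (Icc (0 : ℝ) 1) := ordConnected_Icc.locallyConnectedSpace
  have : LocallyConnectedSpace A := e.isOpenEmbedding.locallyConnectedSpace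
  have : PreconnectedSpace A := e.symm.surjective.denseRange.preconnectedSpace e.symm.continuous
  have : Nontrivial A := e.toEquiv.nontrivial
  have hAc : IsCompact A := isCompact_iff_compactSpace.2 inferInstance
  have hAp : IsPreconnected A := isPreconnected_iff_preconnectedSpace.2 inferInstance
  obtain ⟨s, hs, hsA⟩ := m.exists_notMem hL (continuous_subtype_val (p := (· ∈ A)))
  have hsub : Icc s 1 ⊆ Ioc 0 1 := fun t ht => ⟨hs.1.trans_le ht.1, ht.2⟩
  have hc : ContinuousOn h (Icc s 1) := m.cont.mono hsub
  have hi : Function.Injective ((Icc s 1).domRestrict h) := (m.inj.mono hsub).injective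
  have hAs : ∀ x ∈ A, ∃ t ∈ Icc s 1, h t = x := by
    intro x hx
    rcases hAJ x hx with rfl | ⟨t, ht, rfl⟩
    · exact ⟨1, ⟨hs.2.le, le_rfl⟩, rfl⟩
    · refine ⟨t, ⟨?_, ht.2.le⟩, rfl⟩
      by_contra hcon
      exact hsA ⟨_, hx⟩ ⟨t, ⟨ht.1, not_le.1 hcon⟩, rfl⟩
  let T : Set ℝ := Icc s 1 ∩ h ⁻¹' A
  have hTclosed : IsClosed T := hc.preimage_isClosed_of_isClosed isClosed_Icc hAc.isClosed
  have hTp : IsPreconnected T := by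
    have := hAp.preimage_of_isClosedMap hi
      (hc.domRestrict.isClosedEmbedding hi).isClosedMap (by
        rintro x hx
        obtain ⟨t, ht, rfl⟩ := hAs x hx
        exact ⟨⟨t, ht⟩, rfl⟩)
    have h2 := this.image Subtype.val continuous_subtype_val.continuousOn
    convert h2 using 1
    ext t
    constructor
    · rintro ⟨h1, h2⟩
      exact ⟨⟨t, h1⟩, h2, rfl⟩
    · rintro ⟨t, ht, rfl⟩
      exact ⟨t.2, ht⟩
  have h1T : (1 : ℝ) ∈ T := ⟨⟨hs.2.le, le_rfl⟩, h1A⟩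
  have hbdd : BddBelow T := ⟨s, fun t ht => ht.1.1⟩
  have hinf : sInf T ∈ T := hTclosed.csInf_mem ⟨1, h1T⟩ hbdd
  have hTI : T = Icc (sInf T) 1 := by
    refine Subset.antisymm (fun t ht => ⟨csInf_le hbdd ht, ht.1.2⟩) ?_
    exact hTp.ordConnected.out hinf h1T
  have hAT : A = h '' T := by
    ext x
    constructor
    · intro hx
      obtain ⟨t, ht, rfl⟩ := hAs x hx
      exact ⟨t, ⟨ht, hx⟩, rfl⟩
    · rintro ⟨t, ht, rfl⟩
      exact ht.2
  refine ⟨sInf T, ⟨hs.1.trans_le hinf.1.1, lt_of_le_of_ne hinf.1.2 ?_⟩, by rw [← hTI, ← hAT]⟩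
  intro hone
  rw [hone, Icc_self] at hTI
  rw [hTI, image_singleton] at hAT
  obtain ⟨x, y, hxy⟩ := exists_pair_ne A
  exact hxy (Subtype.ext ((hAT.subset x.2).trans (hAT.subset y.2).symm))

end RayModel

/-! ### Extracting the curve from the class `𝒞` -/

/-- A relatively closed topological ray in `(0, 1)` is a half-open interval ending at `0` or at
`1`. -/
lemma range_ray_eq {ψ : Ici (0 : ℝ) → ℝ} (hψ : Continuous ψ) (hinj : Function.Injective ψ)
    (hI : ∀ x, ψ x ∈ Ioo (0 : ℝ) 1) {C : Set ℝ} (hC : IsClosed C)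
    (hCψ : range ψ = C ∩ Ioo 0 1) :
    ∃ a ∈ Ioo (0 : ℝ) 1, range ψ = Ioc 0 a ∨ range ψ = Ico a 1 := by
  have hpre : PreconnectedSpace (Ici (0 : ℝ)) :=
    isPreconnected_iff_preconnectedSpace.1 isPreconnected_Ici
  have hord : (range ψ).OrdConnected := (isPreconnected_range hψ).ordConnected
  -- `ℝ≥0` and `Ici 0` are the same subtype, and the former is a conditionally complete order.
  have hmono : StrictMono ψ ∨ StrictAnti ψ := by
    let φ : NNReal → Ici (0 : ℝ) := fun t => ⟨t, t.2⟩
    have hφ : Continuous φ := NNReal.continuous_coe.subtype_mk _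
    have hφi : Function.Injective φ := fun x y hxy => NNReal.eq (congrArg Subtype.val hxy)
    refine ((hψ.comp hφ).strictMono_of_inj (hinj.comp hφi)).imp (fun h x y hxy => ?_)
      (fun h x y hxy => ?_)
    · exact h (a := ⟨x, x.2⟩) (b := ⟨y, y.2⟩) hxy
    · exact h (a := ⟨x, x.2⟩) (b := ⟨y, y.2⟩) hxy
  let z : Ici (0 : ℝ) := ⟨0, self_mem_Ici⟩
  have hz : ∀ x, z ≤ x := fun x => x.2
  have hnext : ∀ x : Ici (0 : ℝ), ∃ y, x < y := fun x =>
    ⟨⟨x + 1, mem_Ici.2 (add_nonneg (mem_Ici.1 x.2) zero_le_one)⟩, lt_add_one (x : ℝ)⟩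
  refine ⟨ψ z, hI z, ?_⟩
  rcases hmono with h | h
  · right
    refine Subset.antisymm ?_ ?_
    · rintro _ ⟨x, rfl⟩
      exact ⟨h.monotone (hz x), (hI x).2⟩
    · intro u hu
      by_contra hcon
      have hle : ∀ x, ψ x ≤ u := fun x => by
        by_contra hx
        exact hcon (hord.out ⟨z, rfl⟩ ⟨x, rfl⟩ ⟨hu.1, (not_le.1 hx).le⟩)
      have hK : IsCompact (range ψ) := by
        have : range ψ = C ∩ Icc (ψ z) u := by
          refine Subset.antisymm ?_ ?_
          · rintro _ ⟨x, rfl⟩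
            exact ⟨(hCψ.subset ⟨x, rfl⟩).1, h.monotone (hz x), hle x⟩
          · rintro v ⟨hv, hv'⟩
            exact hCψ.superset ⟨hv, (hI z).1.trans_le hv'.1, hv'.2.trans_lt hu.2⟩
        rw [this]
        exact isCompact_Icc.inter_left hC
      obtain ⟨_, ⟨x, rfl⟩, hx⟩ := hK.exists_isGreatest ⟨_, z, rfl⟩
      obtain ⟨y, hy⟩ := hnext x
      exact absurd (h hy) (not_lt.2 (hx ⟨y, rfl⟩))
  · left
    refine Subset.antisymm ?_ ?_
    · rintro _ ⟨x, rfl⟩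
      exact ⟨(hI x).1, h.antitone (hz x)⟩
    · intro u hu
      by_contra hcon
      have hle : ∀ x, u ≤ ψ x := fun x => by
        by_contra hx
        exact hcon (hord.out ⟨x, rfl⟩ ⟨z, rfl⟩ ⟨(not_le.1 hx).le, hu.2⟩)
      have hK : IsCompact (range ψ) := by
        have : range ψ = C ∩ Icc u (ψ z) := by
          refine Subset.antisymm ?_ ?_
          · rintro _ ⟨x, rfl⟩
            exact ⟨(hCψ.subset ⟨x, rfl⟩).1, hle x, h.antitone (hz x)⟩
          · rintro v ⟨hv, hv'⟩
            exact hCψ.superset ⟨hv, hu.1.trans_le hv'.1, hv'.2.trans_lt (hI z).2⟩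
        rw [this]
        exact isCompact_Icc.inter_left hC
      obtain ⟨_, ⟨x, rfl⟩, hx⟩ := hK.exists_isLeast ⟨_, z, rfl⟩
      obtain ⟨y, hy⟩ := hnext x
      exact absurd (h hy) (not_lt.2 (hx ⟨y, rfl⟩))

/-- The rays in `J` occurring in `ClassC` correspond to half-open intervals ending at `0` or
at `1`; compactness of `L ∪ JL` makes `JL` relatively closed in `J`. -/
lemma IsRaySet.parametrization {X : Type*} [TopologicalSpace X] [T2Space X] {L J JL : Set X}
    (e : J ≃ₜ Ioo (0 : ℝ) 1) (hJL : JL ⊆ J) (hray : IsRaySet JL) (hdisj : Disjoint L J)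
    (hcomp : IsCompact (L ∪ JL)) :
    ∃ a ∈ Ioo (0 : ℝ) 1, (∀ t, (e.symm t : X) ∈ JL ↔ (t : ℝ) ≤ a) ∨
      (∀ t, (e.symm t : X) ∈ JL ↔ a ≤ (t : ℝ)) := by
  obtain ⟨ρ⟩ := hray
  let ψ : Ici (0 : ℝ) → ℝ := fun t => e (inclusion hJL (ρ.symm t))
  have hψ : Continuous ψ := continuous_subtype_val.comp
    (e.continuous.comp ((continuous_inclusion hJL).comp ρ.symm.continuous))
  have hinj : Function.Injective ψ := Subtype.val_injective.comp
    (e.injective.comp ((inclusion_injective hJL).comp ρ.symm.injective))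
  have hmem : ∀ t : Ioo (0 : ℝ) 1, (e.symm t : X) ∈ JL ↔ (t : ℝ) ∈ range ψ := by
    intro t
    constructor
    · intro ht
      refine ⟨ρ ⟨_, ht⟩, ?_⟩
      have : inclusion hJL ⟨e.symm t, ht⟩ = e.symm t := rfl
      simp only [ψ, ρ.symm_apply_apply, this, e.apply_symm_apply]
    · rintro ⟨x, hx⟩
      have : e (inclusion hJL (ρ.symm x)) = t := Subtype.ext hx
      rw [← this, e.symm_apply_apply]
      exact (ρ.symm x).2
  obtain ⟨C, hC, hCeq⟩ := isClosed_induced_iff.1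
    ((hcomp.isClosed.preimage continuous_subtype_val).preimage e.symm.continuous)
  have hCmem : ∀ t : Ioo (0 : ℝ) 1, (e.symm t : X) ∈ JL ↔ (t : ℝ) ∈ C := by
    intro t
    have h1 : (t : ℝ) ∈ C ↔ (e.symm t : X) ∈ L ∪ JL := Set.ext_iff.1 hCeq t
    rw [h1]
    exact ⟨Or.inr, fun h => h.resolve_left fun h' => hdisj.le_bot ⟨h', (e.symm t).2⟩⟩
  have hCψ : range ψ = C ∩ Ioo 0 1 := by
    refine Subset.antisymm ?_ ?_
    · rintro _ ⟨x, rfl⟩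
      exact ⟨(hCmem _).1 ((hmem _).2 ⟨x, rfl⟩), (e _).2⟩
    · rintro t ⟨h1, h2⟩
      exact (hmem ⟨t, h2⟩).1 ((hCmem ⟨t, h2⟩).2 h1)
  obtain ⟨a, ha, h | h⟩ := range_ray_eq hψ hinj (fun x => (e _).2) hC hCψ
  · exact ⟨a, ha, Or.inl fun t => by rw [hmem, h]; exact ⟨fun h => h.2, fun h => ⟨t.2.1, h⟩⟩⟩
  · exact ⟨a, ha, Or.inr fun t => by rw [hmem, h]; exact ⟨fun h => h.1, fun h => ⟨h, t.2.2⟩⟩⟩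

/-- The part of the ray `JL` outside a neighbourhood of `L` has compact parameter set, so it stays
away from both ends of `(0, 1)`. -/
lemma exists_isCompact_param {X : Type*} [TopologicalSpace X] {L J JL : Set X}
    (e : J ≃ₜ Ioo (0 : ℝ) 1) (hJL : JL ⊆ J) (hcomp : IsCompact (L ∪ JL)) {U : Set X}
    (hU : IsOpen U) (hLU : L ⊆ U) :
    ∃ T ⊆ Ioo (0 : ℝ) 1, IsCompact T ∧
      ∀ t, (e.symm t : X) ∈ JL → (t : ℝ) ∉ T → (e.symm t : X) ∈ U := by
  have hK : (L ∪ JL) \ U ⊆ J := by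
    rintro x ⟨hx | hx, hxU⟩
    · exact absurd (hLU hx) hxU
    · exact hJL hx
  have hKc : IsCompact (Subtype.val ⁻¹' ((L ∪ JL) \ U) : Set J) := by
    rw [Subtype.isCompact_iff, Subtype.image_preimage_val, inter_eq_right.2 hK]
    exact hcomp.diff hU
  refine ⟨Subtype.val '' (e '' (Subtype.val ⁻¹' ((L ∪ JL) \ U))), ?_,
    (hKc.image e.continuous).image continuous_subtype_val, ?_⟩
  · rintro _ ⟨t, -, rfl⟩
    exact t.2
  · intro t ht htT
    by_contra hcon
    exact htT ⟨t, ⟨e.symm t, ⟨Or.inr ht, hcon⟩, e.apply_symm_apply t⟩, rfl⟩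

/-- The orientation of the parametrization of `J` can be chosen so that the end towards `L` is
at `0` and the end towards `R` is at `1`. -/
lemma ClassC.exists_oriented {X : Type*} [TopologicalSpace X] [T2Space X] {L J R : Set X}
    (hC : ClassC L J R) :
    ∃ (e : J ≃ₜ Ioo (0 : ℝ) 1) (JL JR : Set X) (a b : ℝ), JL ⊆ J ∧ JR ⊆ J ∧ a ∈ Ioo (0 : ℝ) 1 ∧
      b ∈ Ioo (0 : ℝ) 1 ∧ (∀ t, (e.symm t : X) ∈ JL ↔ (t : ℝ) ≤ a) ∧
      (∀ t, (e.symm t : X) ∈ JR ↔ b ≤ (t : ℝ)) ∧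
      IsCompact (L ∪ JL) ∧ L ⊆ closure JL ∧ IsCompact (R ∪ JR) := by
  obtain ⟨JL, JR, hJ, hJL, hJR, hLc, hLcl, hRc, -⟩ := hC.rays
  obtain ⟨e⟩ := hC.freeJ
  have hJLJ : JL ⊆ J := hJ ▸ subset_union_left
  have hJRJ : JR ⊆ J := hJ ▸ subset_union_right
  have hcov : ∀ t : Ioo (0 : ℝ) 1, (e.symm t : X) ∈ JL ∨ (e.symm t : X) ∈ JR := fun t =>
    hJ.superset (e.symm t).2
  obtain ⟨a, ha, hL⟩ := hJL.parametrization e hJLJ hC.disjLJ hLc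
  obtain ⟨b, hb, hR⟩ := hJR.parametrization e hJRJ hC.disjRJ hRc
  have hcl : L ⊆ closure JL := subset_union_left.trans hLcl
  rcases hL with hL | hL <;> rcases hR with hR | hR
  · obtain ⟨c, hc, hc1⟩ := exists_between (max_lt ha.2 hb.2)
    have h := hcov ⟨c, ha.1.trans ((le_max_left _ _).trans_lt hc), hc1⟩
    rw [hL, hR] at h
    rcases h with h | h
    · exact absurd ((le_max_left a b).trans_lt hc) (not_lt.2 h)
    · exact absurd ((le_max_right a b).trans_lt hc) (not_lt.2 h)
  · exact ⟨e, JL, JR, a, b, hJLJ, hJRJ, ha, hb, hL, hR, hLc, hcl, hRc⟩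
  · have hσ : ∀ t ∈ Ioo (0 : ℝ) 1, 1 - t ∈ Ioo (0 : ℝ) 1 := fun t ht =>
      ⟨sub_pos.2 ht.2, sub_lt_self _ ht.1⟩
    let σ : Ioo (0 : ℝ) 1 ≃ₜ Ioo (0 : ℝ) 1 :=
      { toFun := fun t => ⟨1 - t, hσ t t.2⟩
        invFun := fun t => ⟨1 - t, hσ t t.2⟩
        left_inv := fun t => Subtype.ext (sub_sub_cancel 1 (t : ℝ))
        right_inv := fun t => Subtype.ext (sub_sub_cancel 1 (t : ℝ))
        continuous_toFun := by fun_prop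
        continuous_invFun := by fun_prop }
    refine ⟨e.trans σ, JL, JR, 1 - a, 1 - b, hJLJ, hJRJ, hσ a ha, hσ b hb, fun t => ?_,
      fun t => ?_, hLc, hcl, hRc⟩
    · exact (hL (σ.symm t)).trans le_sub_comm
    · exact (hR (σ.symm t)).trans sub_le_comm
  · obtain ⟨c, hc0, hc⟩ := exists_between (lt_min ha.1 hb.1)
    have h := hcov ⟨c, hc0, hc.trans ((min_le_left _ _).trans_lt ha.2)⟩
    rw [hL, hR] at h
    rcases h with h | h
    · exact absurd (hc.trans_le (min_le_left a b)) (not_lt.2 h)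
    · exact absurd (hc.trans_le (min_le_right a b)) (not_lt.2 h)

/-- The curve of the model is the inverse of the parametrization of `J`, extended by `x₀` at `1`
(and by `x₀` outside `(0, 1)`, where its values play no role). -/
lemma ClassC.exists_rayModel {X : Type*} [TopologicalSpace X] [T2Space X] {L J : Set X} {x₀ : X}
    (hC : ClassC L J {x₀}) (hx₀ : x₀ ∈ L) :
    ∃ h : ℝ → X, RayModel L h ∧ h 1 = x₀ ∧ J = h '' Ioo 0 1 := by
  obtain ⟨e, JL, JR, a, b, hJL, hJR, ha, hb, haL, hbR, hLc, hcl, hRc⟩ := hC.exists_oriented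
  classical
  let h : ℝ → X := fun t => if ht : t ∈ Ioo (0 : ℝ) 1 then (e.symm ⟨t, ht⟩ : X) else x₀
  have hh : ∀ t : Ioo (0 : ℝ) 1, h t = e.symm t := fun t => dif_pos t.2
  have h1 : h 1 = x₀ := dif_neg fun h => lt_irrefl _ h.2
  have hJ : J = h '' Ioo 0 1 := by
    ext x
    constructor
    · intro hx
      refine ⟨e ⟨x, hx⟩, (e _).2, ?_⟩
      rw [hh, e.symm_apply_apply]
    · rintro ⟨t, ht, rfl⟩
      rw [hh ⟨t, ht⟩]
      exact (e.symm _).2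
  have hnotL : ∀ t ∈ Ioo (0 : ℝ) 1, h t ∉ L := fun t ht htL =>
    hC.disjLJ.le_bot ⟨htL, hJ.superset ⟨t, ht, rfl⟩⟩
  have hinj : ∀ t ∈ Ioo (0 : ℝ) 1, ∀ u ∈ Ioo (0 : ℝ) 1, h t = h u → t = u := by
    intro t ht u hu htu
    rw [hh ⟨t, ht⟩, hh ⟨u, hu⟩] at htu
    exact congrArg Subtype.val (e.symm.injective (Subtype.ext htu))
  have hcont : ContinuousOn h (Ioo 0 1) := by
    rw [continuousOn_iff_continuous_domRestrict]
    exact (continuous_subtype_val.comp e.symm.continuous).congr fun t => (hh t).symm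
  refine ⟨h, ⟨?_, ?_, h1 ▸ hx₀, hnotL, ?_, ?_, ?_, ?_⟩, h1, hJ⟩
  · intro t ht
    rcases ht.2.lt_or_eq with h' | rfl
    · exact (hcont.continuousAt (Ioo_mem_nhds ht.1 h')).continuousWithinAt
    · intro V hV
      rw [h1] at hV
      obtain ⟨U, hUV, hU, hxU⟩ := mem_nhds_iff.1 hV
      obtain ⟨T, hTI, hTc, hT⟩ :=
        exists_isCompact_param e hJR hRc hU (singleton_subset_iff.2 hxU)
      have h1T : (1 : ℝ) ∉ T := fun h => lt_irrefl _ (hTI h).2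
      change ∀ᶠ t in 𝓝[Ioc 0 1] 1, h t ∈ V
      filter_upwards [self_mem_nhdsWithin,
        nhdsWithin_le_nhds (hTc.isClosed.isOpen_compl.mem_nhds h1T),
        nhdsWithin_le_nhds (Ioi_mem_nhds hb.2)] with t ht htT htb
      rcases ht.2.lt_or_eq with h' | rfl
      · rw [hh ⟨t, ht.1, h'⟩]
        exact hUV (hT _ ((hbR _).2 (mem_Ioi.1 htb).le) htT)
      · rw [h1]
        exact hUV hxU
  · intro t ht u hu htu
    rcases ht.2.lt_or_eq with h' | rfl <;> rcases hu.2.lt_or_eq with h'' | rfl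
    · exact hinj t ⟨ht.1, h'⟩ u ⟨hu.1, h''⟩ htu
    · rw [h1] at htu
      exact absurd (htu ▸ hx₀) (hnotL t ⟨ht.1, h'⟩)
    · rw [h1] at htu
      exact absurd (htu ▸ hx₀) (hnotL u ⟨hu.1, h''⟩)
    · rfl
  · intro x
    have hx : x ∈ L ∪ J ∪ {x₀} := hC.union_eq ▸ mem_univ x
    rcases hx with (hx | hx) | rfl
    · exact Or.inl hx
    · exact Or.inr (hJ.subset hx)
    · exact Or.inl hx₀
  · intro U hUI hU
    have : h '' U = Subtype.val '' (e ⁻¹' (Subtype.val ⁻¹' U)) := by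
      ext x
      constructor
      · rintro ⟨t, ht, rfl⟩
        refine ⟨e.symm ⟨t, hUI ht⟩, ?_, (hh ⟨t, hUI ht⟩).symm⟩
        rw [mem_preimage, e.apply_symm_apply]
        exact ht
      · rintro ⟨y, hy, rfl⟩
        refine ⟨e y, hy, ?_⟩
        rw [hh, e.symm_apply_apply]
    rw [this]
    exact hC.openJ.isOpenMap_subtype_val _
      ((hU.preimage continuous_subtype_val).preimage e.continuous)
  · intro U hU hLU
    obtain ⟨T, hTI, hTc, hT⟩ := exists_isCompact_param e hJL hLc hU hLU
    have h0T : (0 : ℝ) ∉ T := fun h => lt_irrefl _ (hTI h).1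
    obtain ⟨ε, hε, hεT⟩ := Metric.isOpen_iff.1 hTc.isClosed.isOpen_compl 0 h0T
    refine ⟨min ε a, lt_min hε ha.1, fun t ht => ?_⟩
    have hta : t < a := ht.2.trans_le (min_le_right _ _)
    rw [hh ⟨t, ht.1, hta.trans ha.2⟩]
    refine hT _ ((haL _).2 hta.le) (hεT ?_)
    rw [Metric.mem_ball, Real.dist_eq, sub_zero, abs_of_pos ht.1]
    exact ht.2.trans_le (min_le_left _ _)
  · intro p hp U hU hpU ε hε
    have hK : IsCompact (h '' Icc (min ε a) a) := isCompact_Icc.image_of_continuousOn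
      (hcont.mono fun t ht => ⟨(lt_min hε ha.1).trans_le ht.1, ht.2.trans_lt ha.2⟩)
    have hpK : p ∉ h '' Icc (min ε a) a := by
      rintro ⟨t, ht, rfl⟩
      exact hnotL t ⟨(lt_min hε ha.1).trans_le ht.1, ht.2.trans_lt ha.2⟩ hp
    obtain ⟨x, ⟨hxU, hxK⟩, hxJ⟩ := mem_closure_iff.1 (hcl hp) _
      (hU.inter hK.isClosed.isOpen_compl) ⟨hpU, hpK⟩
    obtain ⟨t, ht, rfl⟩ := hJ.subset (hJL hxJ)
    rw [hh ⟨t, ht⟩, haL] at hxJ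
    refine ⟨t, ht, ?_, hxU⟩
    by_contra hcon
    exact hxK ⟨t, ⟨(min_le_left _ _).trans (not_lt.1 hcon), hxJ⟩, rfl⟩

/-! ### Minimal sets and retracts -/

/-- Minimal sets of a retract `P` are those minimal sets of the whole space which lie in `P`:
precompose with the retraction in one direction, postcompose with it in the other. -/
lemma mem_MSetIn_iff_of_retraction {X : Type*} [TopologicalSpace X] {P : Set X}
    {r : X → X} (hr : Continuous r) (hrP : ∀ x, r x ∈ P) (hrid : ∀ x ∈ P, r x = x) {M : Set X}
    (hPc : IsClosed P) : M ∈ MSetIn P ↔ M ∈ MSpace X ∧ M ⊆ P := by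
  constructor
  · rintro ⟨M', ⟨hMc, f, hf, hne, himg, hmin⟩, rfl⟩
    let ρ : X → P := fun x => ⟨r x, hrP x⟩
    have hρ : Continuous ρ := hr.subtype_mk _
    have hρid : ∀ x : P, ρ x = x := fun x => Subtype.ext (hrid x x.2)
    refine ⟨⟨hMc.image continuous_subtype_val, fun x => f (ρ x),
      continuous_subtype_val.comp (hf.comp hρ), hne.image _, ?_, ?_⟩, ?_⟩
    · simp only [image_image, hρid]
      rw [← image_image (g := Subtype.val) (f := f), himg]
    · intro N hNM hN hNc hFN
      have hNP : Subtype.val '' (Subtype.val ⁻¹' N : Set P) = N := by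
        rw [Subtype.image_preimage_val, inter_eq_right]
        exact hNM.trans (Subtype.coe_image_subset P M')
      rw [← hNP]
      congr 1
      refine hmin _ ?_ ?_ (hNc.preimage continuous_subtype_val) ?_
      · intro x hx
        obtain ⟨y, hy, hyx⟩ := hNM hx
        rwa [← Subtype.ext hyx]
      · rw [← hNP] at hN
        exact hN.of_image
      · rintro _ ⟨x, hx, rfl⟩
        have : (f (ρ x) : X) ∈ N := hFN ⟨x, hx, rfl⟩
        rwa [hρid] at this
    · exact Subtype.coe_image_subset P M'
  · rintro ⟨⟨hMc, F, hF, hne, himg, hmin⟩, hMP⟩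
    have hMim : Subtype.val '' (Subtype.val ⁻¹' M : Set P) = M := by
      rw [Subtype.image_preimage_val, inter_eq_right.2 hMP]
    refine ⟨Subtype.val ⁻¹' M, ⟨?_, fun p => ⟨r (F p), hrP _⟩,
      (hr.comp (hF.comp continuous_subtype_val)).subtype_mk _, ?_, ?_, ?_⟩, hMim.symm⟩
    · rwa [Subtype.isCompact_iff, hMim]
    · rw [← hMim] at hne
      exact hne.of_image
    · ext p
      constructor
      · rintro ⟨q, hq, rfl⟩
        have h1 : F q ∈ M := himg.subset ⟨q, hq, rfl⟩
        change r (F q) ∈ M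
        rwa [hrid _ (hMP h1)]
      · intro hp
        obtain ⟨x, hx, hxp⟩ := himg.superset hp
        have h1 : r (F x) = p := by rw [hxp, hrid _ p.2]
        exact ⟨⟨x, hMP hx⟩, hx, Subtype.ext h1⟩
    · intro N hNM hN hNc hFN
      have h1 := hmin (Subtype.val '' N) (by
          rintro _ ⟨x, hx, rfl⟩
          exact hNM hx) (hN.image _) (hPc.isClosedEmbedding_subtypeVal.isClosedMap _ hNc) (by
          rintro _ ⟨_, ⟨x, hx, rfl⟩, rfl⟩
          have h2 : F x ∈ M := himg.subset ⟨x, hNM hx, rfl⟩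
          refine ⟨_, hFN ⟨x, hx, rfl⟩, hrid _ (hMP h2)⟩)
      rw [← h1, Subtype.val_injective.preimage_image]

/-! ### The theorem -/

/-- If `X = L ∪ J ∪ R ∈ 𝒞`, `R` a singleton, `L` nondegenerate, `R ⊆ L`, then
`𝓜(X) = ⋃ {𝓜(L ∪ A) : A an arc, R ⊆ A ⊊ R ∪ J}`. -/
theorem stmt0 {X : Type*} [TopologicalSpace X] [CompactSpace X] [ConnectedSpace X]
    [TopologicalSpace.MetrizableSpace X] {L J R : Set X} (hC : ClassC L J R)
    (hR : ∃ x, R = {x}) (hL : L.Nontrivial) (hRL : R ⊆ L) :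
    MSpace X = {M : Set X | ∃ A : Set X, IsArc A ∧ R ⊆ A ∧ A ⊆ R ∪ J ∧ A ≠ R ∪ J ∧
      M ∈ MSetIn (L ∪ A)} := by
  obtain ⟨x₀, rfl⟩ := hR
  obtain ⟨h, m, rfl, rfl⟩ := hC.exists_rayModel (singleton_subset_iff.1 hRL)
  have hP : ∀ s ∈ Ioo (0 : ℝ) 1, ∀ M,
      M ∈ MSetIn (L ∪ h '' Icc s 1) ↔ M ∈ MSpace X ∧ M ⊆ L ∪ h '' Icc s 1 := by
    intro s hs M
    obtain ⟨r, hr, hrP, hrid⟩ := m.exists_retraction hC.compactL hC.connL hC.locConnL hs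
    exact mem_MSetIn_iff_of_retraction hr hrP hrid (m.isClosed_union hs)
  ext M
  constructor
  · intro hM
    obtain ⟨hMc, F, hF, hmin⟩ := hM
    obtain ⟨s, hs, hsM⟩ := m.minimal_avoids_end hL hC.compactL hC.locConnL hF hMc hmin
    refine ⟨h '' Icc s 1, m.isArc_image hs,
      singleton_subset_iff.2 ⟨1, ⟨hs.2.le, le_rfl⟩, rfl⟩, ?_, ?_,
      (hP s hs M).2 ⟨⟨hMc, F, hF, hmin⟩, fun x hx => ?_⟩⟩
    · rintro _ ⟨t, ht, rfl⟩
      rcases ht.2.lt_or_eq with h' | rfl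
      · exact Or.inr ⟨t, ⟨hs.1.trans_le ht.1, h'⟩, rfl⟩
      · exact Or.inl rfl
    · intro hA
      have hs2 : s / 2 ∈ Ioo (0 : ℝ) 1 := ⟨half_pos hs.1, (half_lt_self hs.1).trans hs.2⟩
      obtain ⟨t, ht, hts⟩ := hA.superset (Or.inr ⟨s / 2, hs2, rfl⟩)
      have := m.inj ⟨hs.1.trans_le ht.1, ht.2⟩ ⟨hs2.1, hs2.2.le⟩ hts
      exact absurd ht.1 (not_le.2 (this ▸ half_lt_self hs.1))
    · rcases m.cover x with hxL | ⟨t, ht, rfl⟩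
      · exact Or.inl hxL
      · refine Or.inr ⟨t, ⟨?_, ht.2.le⟩, rfl⟩
        by_contra hts
        exact hsM t ⟨ht.1, not_le.1 hts⟩ hx
  · rintro ⟨A, hA, h1A, hAJ, -, hM⟩
    obtain ⟨s, hs, rfl⟩ := m.arc_eq hL hA (singleton_subset_iff.1 h1A) hAJ
    exact ((hP s hs M).1 hM).1
end

section
/- Let X = L ∪ J ∪ R be a continuum in the class 𝒞 such that R is a singleton, L is nondegenerate, and L ∩ R = ∅. Then 𝓜(X) is the disjoint union of 𝓜(L) and 𝓜(J ∪ R): a set M belongs to 𝓜(X) if and only if M ∈ 𝓜(L) or M ∈ 𝓜(J ∪ R), and no set belongs to both systems. Moreover, 𝓜(J ∪ R) is exactly the system of all subsets of J ∪ R that are nonempty finite sets or Cantor sets. -/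
/-!
Since `R` is a point, `Lᶜ = J ∪ R` is a half-open arc winding towards `L`. It carries a coordinate
`θ`, continuous on all of `X`, vanishing exactly on `L` and identifying `Lᶜ` with `(0, 1]`
(`ClassC.exists_coord`). Everything afterwards is phrased in terms of this coordinate.

*Minimal sets of `X` lie in `L` or in `Lᶜ`.* As `L` is nondegenerate and `Lᶜ` accumulates on all of
it, no path leads from `Lᶜ` to `L` (`Coord.no_path`). For a continuous `F : X → X`, the set of
points of `L` sent into `L` is therefore clopen in `L`, because nearby points of the locally connected
compactum `L` are joined by paths. So either `F(L) ⊆ L`, and a minimal set meeting `L` lies in `L`;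
or `F(L) ⊆ Lᶜ`, and then also `F(Lᶜ) ⊆ Lᶜ`, so a minimal set `M = F(M)` lies in `Lᶜ`
(`Coord.subset_or`).

*Minimal sets of `L` and `Lᶜ` are minimal sets of `X`.* For `L` this holds because `L` is a retract
of `X` (`Coord.exists_retraction`): sampling the ray finely, replacing the samples by nearest points
of `L` and joining these by small curves in `L` produces a path in `L` asymptotic to the ray. For
`Lᶜ ≅ (0, 1]` it follows from the Tietze extension theorem (`Coord.exists_extension`), which
moreover extends any self-map of a compact subset of `Lᶜ`.

*Minimal sets of `Lᶜ`.* A minimal set in the line is finite or a Cantor set, by the intermediate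
value theorem (`IsMinMap.finite_or_cantor`). Conversely a finite set carries a cyclic permutation,
and a Cantor set is homeomorphic to `ℤ_[2]` by Brouwer's theorem (`nonempty_homeomorph_cantor`),
hence carries a dyadic odometer.

The curves in `L` come from `exists_interpolation`, a form of the theorem that a locally connected
compactum is uniformly locally path connected, proved by refining chains of points.
-/

open Set Topology

/-! ### Minimal maps -/

/-- A continuous self-map with no nonempty proper closed invariant set. -/
def IsMinMap {T : Type*} [TopologicalSpace T] (g : T → T) : Prop :=
  Continuous g ∧ ∀ N : Set T, IsClosed N → N.Nonempty → MapsTo g N N → N = univ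

lemma MinimalSystemOn.congr {X : Type*} [TopologicalSpace X] {F G : X → X} {M : Set X}
    (h : MinimalSystemOn F M) (hFG : EqOn F G M) : MinimalSystemOn G M := by
  obtain ⟨h1, h2, h3⟩ := h
  refine ⟨h1, by rw [← hFG.image_eq, h2], fun N hN hne hcl hi => h3 N hN hne hcl ?_⟩
  rwa [(hFG.mono hN).image_eq]

/-- A minimal system, stated with a map of the ambient space, as a minimal map of the subspace. -/
lemma exists_isMinMap {X : Type*} [TopologicalSpace X] [T2Space X] {M : Set X} {F : X → X}
    (hM : IsCompact M) (hF : ContinuousOn F M) (hmin : MinimalSystemOn F M) :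
    ∃ g : M → M, IsMinMap g := by
  obtain ⟨-, h2, h3⟩ := hmin
  have hmaps : MapsTo F M M := fun x hx => h2 ▸ mem_image_of_mem F hx
  refine ⟨hmaps.restrict, hF.mapsToRestrict hmaps, fun N hN hne hi => ?_⟩
  have key := h3 (Subtype.val '' N) (by rintro _ ⟨y, -, rfl⟩; exact y.2) (hne.image _)
    (hM.isClosed.isClosedEmbedding_subtypeVal.isClosedMap N hN) (by
      rintro _ ⟨_, ⟨y, hy, rfl⟩, rfl⟩
      exact ⟨_, hi hy, rfl⟩)
  refine eq_univ_of_forall fun x => ?_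
  obtain ⟨y, hy, hxy⟩ : (x : X) ∈ Subtype.val '' N := by rw [key]; exact x.2
  exact (Subtype.ext hxy) ▸ hy

/-- Surjectivity comes for free: the image of a compact minimal system is closed and invariant. -/
lemma exists_minimalSystemOn {X : Type*} [TopologicalSpace X] [T2Space X] {M : Set X}
    (hM : IsCompact M) (hne : M.Nonempty) {g : M → M} (hg : IsMinMap g) :
    ∃ F : X → X, ContinuousOn F M ∧ MinimalSystemOn F M := by
  classical
  let F : X → X := fun x => if h : x ∈ M then (g ⟨x, h⟩ : X) else x
  have hFv : ∀ x : M, F x = g x := fun x => by simp [F]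
  have : CompactSpace M := isCompact_iff_compactSpace.1 hM
  have : Nonempty M := hne.to_subtype
  refine ⟨F, ?_, hne, ?_, fun N hNM hNne hNcl hi => ?_⟩
  · rw [continuousOn_iff_continuous_domRestrict]
    have : M.domRestrict F = fun x => (g x : X) := funext hFv
    rw [this]
    exact continuous_subtype_val.comp hg.1
  · have hr : range g = univ :=
      hg.2 _ (isCompact_range hg.1).isClosed (range_nonempty g) fun x _ => mem_range_self x
    ext x
    constructor
    · rintro ⟨y, hy, rfl⟩
      rw [hFv ⟨y, hy⟩]
      exact (g _).2
    · intro hx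
      obtain ⟨y, hy⟩ : (⟨x, hx⟩ : M) ∈ range g := hr ▸ mem_univ _
      exact ⟨y, y.2, by rw [hFv, hy]⟩
  · have := hg.2 (Subtype.val ⁻¹' N) (hNcl.preimage continuous_subtype_val)
      (by obtain ⟨y, hy⟩ := hNne; exact ⟨⟨y, hNM hy⟩, hy⟩)
      (fun x hx => by
        change (g x : X) ∈ N
        rw [← hFv]
        exact hi ⟨x, hx, rfl⟩)
    refine hNM.antisymm fun x hx => ?_
    have h : (⟨x, hx⟩ : M) ∈ Subtype.val ⁻¹' N := this ▸ mem_univ _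
    exact h

/-- Membership in `𝓜(Z)` in terms of maps of the ambient space. -/
lemma mem_MSetIn_iff {X : Type*} [TopologicalSpace X] [T2Space X] {Z M : Set X} :
    M ∈ MSetIn Z ↔ M ⊆ Z ∧ IsCompact M ∧
      ∃ F : X → X, ContinuousOn F Z ∧ MapsTo F Z Z ∧ MinimalSystemOn F M := by
  classical
  constructor
  · rintro ⟨M', ⟨hc, f, hf, hne, him, hmin⟩, rfl⟩
    let F : X → X := fun x => if h : x ∈ Z then (f ⟨x, h⟩ : X) else x
    have hFv : ∀ x : Z, F x = f x := fun x => by simp [F]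
    refine ⟨by rintro _ ⟨y, -, rfl⟩; exact y.2, hc.image continuous_subtype_val, F, ?_, ?_,
      hne.image _, ?_, fun N hN hNne hNcl hi => ?_⟩
    · rw [continuousOn_iff_continuous_domRestrict]
      have : Z.domRestrict F = fun x => (f x : X) := funext hFv
      rw [this]
      exact continuous_subtype_val.comp hf
    · intro x hx
      rw [hFv ⟨x, hx⟩]
      exact (f _).2
    · conv_rhs => rw [← him]
      rw [image_image, image_image]
      exact image_congr fun x _ => hFv x
    · have h := hmin (Subtype.val ⁻¹' N) (fun x hx => by
          obtain ⟨y, hy, hyx⟩ := hN hx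
          exact Subtype.ext hyx ▸ hy)
        (by
          obtain ⟨y, hy⟩ := hNne
          obtain ⟨z, -, rfl⟩ := hN hy
          exact ⟨z, hy⟩)
        (hNcl.preimage continuous_subtype_val)
        (by
          rintro _ ⟨x, hx, rfl⟩
          change (f x : X) ∈ N
          rw [← hFv]
          exact hi ⟨x, hx, rfl⟩)
      rw [← h, Subtype.image_preimage_coe, eq_comm, inter_eq_right]
      intro x hx
      obtain ⟨y, -, rfl⟩ := hN hx
      exact y.2
  · rintro ⟨hMZ, hc, F, hF, hmaps, hne, him, hmin⟩
    have hval : Subtype.val '' (Subtype.val ⁻¹' M : Set Z) = M := by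
      rw [Subtype.image_preimage_coe, inter_eq_right]; exact hMZ
    refine ⟨Subtype.val ⁻¹' M, ⟨?_, hmaps.restrict, hF.mapsToRestrict hmaps, ?_, ?_, ?_⟩, hval.symm⟩
    · rw [Subtype.isCompact_iff, hval]; exact hc
    · obtain ⟨y, hy⟩ := hne
      exact ⟨⟨y, hMZ hy⟩, hy⟩
    · ext x
      constructor
      · rintro ⟨y, hy, rfl⟩
        change F y ∈ M
        rw [← him]
        exact ⟨y, hy, rfl⟩
      · intro hx
        obtain ⟨y, hy, hyx⟩ : (x : X) ∈ F '' M := him.symm ▸ hx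
        exact ⟨⟨y, hMZ hy⟩, hy, Subtype.ext hyx⟩
    · intro N hN hNne hNcl hi
      have hNc : IsCompact N := by
        have : IsCompact (Subtype.val ⁻¹' M : Set Z) := by
          rw [Subtype.isCompact_iff, hval]; exact hc
        exact this.of_isClosed_subset hNcl hN
      have h := hmin (Subtype.val '' N) (by rintro _ ⟨y, hy, rfl⟩; exact hN hy) (hNne.image _)
        (hNc.image continuous_subtype_val).isClosed
        (by
          rintro _ ⟨_, ⟨y, hy, rfl⟩, rfl⟩
          exact ⟨_, hi ⟨y, hy, rfl⟩, rfl⟩)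
      rw [← h, preimage_image_eq _ Subtype.val_injective]

/-- Along a minimal map every forward orbit, even without its initial point, is dense. -/
lemma IsMinMap.exists_iterate_mem {T : Type*} [TopologicalSpace T] {g : T → T} (hg : IsMinMap g)
    (x : T) {U : Set T} (hU : IsOpen U) (hne : U.Nonempty) : ∃ n, 0 < n ∧ g^[n] x ∈ U := by
  have h := hg.2 (closure (range fun n : ℕ => g^[n + 1] x)) isClosed_closure
    (range_nonempty _).closure (by
      refine MapsTo.closure ?_ hg.1
      rintro _ ⟨n, rfl⟩
      exact ⟨n + 1, Function.iterate_succ_apply' g (n + 1) x⟩)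
  obtain ⟨y, hy⟩ := hne
  obtain ⟨_, hz, ⟨n, rfl⟩⟩ := mem_closure_iff.1 (h ▸ mem_univ y) U hU hy
  exact ⟨n + 1, n.succ_pos, hz⟩

/-- A minimal map with a periodic point lives on a finite space. -/
lemma IsMinMap.finite_of_periodic {T : Type*} [TopologicalSpace T] [T1Space T] {g : T → T}
    (hg : IsMinMap g) {x : T} {n : ℕ} (hn : 0 < n) (hx : g^[n] x = x) : Finite T := by
  let O : Set T := (fun k => g^[k] x) '' Iio n
  have hfin : O.Finite := (finite_Iio n).image _
  have h := hg.2 O hfin.isClosed ⟨x, 0, hn, rfl⟩ (by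
    rintro _ ⟨k, hk, rfl⟩
    have hk : k < n := hk
    rcases (Nat.succ_le_of_lt hk).lt_or_eq with h | h
    · exact ⟨k + 1, h, Function.iterate_succ_apply' g k x⟩
    · refine ⟨0, hn, ?_⟩
      change x = g (g^[k] x)
      rw [← Function.iterate_succ_apply' g k x, h, hx])
  exact finite_univ_iff.1 (h ▸ hfin)

/-- On a compact subset of the line, a minimal map is either finite or lives on a Cantor set:
a nondegenerate component would be mapped into itself by some iterate, which then has a fixed
point there by the intermediate value theorem. -/
lemma IsMinMap.finite_or_cantor {T : Type*} [TopologicalSpace T] [T2Space T] [CompactSpace T]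
    {g : T → T} (hg : IsMinMap g) {θ : T → ℝ} (hθ : Continuous θ) (hinj : Function.Injective θ) :
    Finite T ∨ (TotallyDisconnectedSpace T ∧ NoIsolatedPoints T) := by
  by_cases hfin : Finite T
  · exact Or.inl hfin
  refine Or.inr ⟨?_, ?_⟩
  · by_contra hnot
    rw [totallyDisconnectedSpace_iff_connectedComponent_singleton] at hnot
    push Not at hnot
    obtain ⟨x, hx⟩ := hnot
    set K := connectedComponent x with hK
    have hKpre : IsPreconnected K := isPreconnected_connectedComponent
    have hKc : IsCompact K := isClosed_connectedComponent.isCompact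
    have hKne : K.Nonempty := ⟨x, mem_connectedComponent⟩
    obtain ⟨p, hp, hpmin⟩ := hKc.exists_isMinOn hKne hθ.continuousOn
    obtain ⟨q, hq, hqmax⟩ := hKc.exists_isMaxOn hKne hθ.continuousOn
    have hpq : θ p < θ q := by
      refine lt_of_le_of_ne (hpmin hq) fun h => hx ?_
      refine Subset.antisymm (fun y hy => ?_) (singleton_subset_iff.2 mem_connectedComponent)
      have e1 : θ y = θ p := le_antisymm ((hqmax hy).trans h.ge) (hpmin hy)
      have e2 : θ x = θ p :=
        le_antisymm ((hqmax mem_connectedComponent).trans h.ge) (hpmin mem_connectedComponent)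
      exact hinj (e1.trans e2.symm)
    let U : Set T := θ ⁻¹' Ioo (θ p) (θ q)
    have hUK : U ⊆ K := fun y hy => by
      obtain ⟨z, hz, hzy⟩ := hKpre.intermediate_value hp hq hθ.continuousOn
        (Ioo_subset_Icc_self hy)
      exact hinj hzy ▸ hz
    have hUne : U.Nonempty := by
      obtain ⟨c, hc⟩ := exists_between hpq
      obtain ⟨z, hz, hzy⟩ := hKpre.intermediate_value hp hq hθ.continuousOn
        (Ioo_subset_Icc_self hc)
      exact ⟨z, by change θ z ∈ Ioo _ _; rw [hzy]; exact hc⟩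
    obtain ⟨y, hy⟩ := hUne
    obtain ⟨n, hn, hny⟩ := hg.exists_iterate_mem y (isOpen_Ioo.preimage hθ) ⟨y, hy⟩
    have hgn : Continuous g^[n] := hg.1.iterate n
    have hmaps : MapsTo g^[n] K K := by
      have h1 : g^[n] '' K ⊆ connectedComponent (g^[n] y) :=
        (hKpre.image _ hgn.continuousOn).subset_connectedComponent ⟨y, hUK hy, rfl⟩
      rw [← connectedComponent_eq (hUK hny)] at h1
      exact fun z hz => h1 ⟨z, hz, rfl⟩
    obtain ⟨z, hz, hzz⟩ := hKpre.intermediate_value₂ hp hq hθ.continuousOn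
      (hθ.comp hgn).continuousOn (hpmin (hmaps hp)) (hqmax (hmaps hq))
    exact hfin (hg.finite_of_periodic hn (hinj hzz).symm)
  · intro y hy
    obtain ⟨n, hn, hny⟩ := hg.exists_iterate_mem y hy (singleton_nonempty y)
    exact hfin (hg.finite_of_periodic hn hny)

/-! ### Cantor sets and finite sets carry minimal maps -/

/-- A rule splitting a nonempty clopen set `P` at stage `n`: the piece `S n P` cuts `P` into two
nonempty parts, and it is the `n`-th clopen set `U n` whenever `U n` does so. -/
structure IsSplitter {T : Type*} [TopologicalSpace T] (U : ℕ → Set T) (S : ℕ → Set T → Set T) :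
    Prop where
  isClopen : ∀ n P, IsClopen P → P.Nonempty → IsClopen (S n P)
  inter : ∀ n P, IsClopen P → P.Nonempty → (P ∩ S n P).Nonempty
  diff : ∀ n P, IsClopen P → P.Nonempty → (P \ S n P).Nonempty
  eq : ∀ n P, (P ∩ U n).Nonempty → (P \ U n).Nonempty → S n P = U n

lemma exists_isSplitter {T : Type*} [TopologicalSpace T] [T2Space T] [CompactSpace T]
    [TotallyDisconnectedSpace T] (hiso : NoIsolatedPoints T) {U : ℕ → Set T}
    (hU : ∀ n, IsClopen (U n)) : ∃ S, IsSplitter U S := by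
  have key : ∀ n P, ∃ V : Set T, (IsClopen P → P.Nonempty →
      IsClopen V ∧ (P ∩ V).Nonempty ∧ (P \ V).Nonempty) ∧
      ((P ∩ U n).Nonempty → (P \ U n).Nonempty → V = U n) := by
    intro n P
    by_cases h : (P ∩ U n).Nonempty ∧ (P \ U n).Nonempty
    · exact ⟨U n, fun _ _ => ⟨hU n, h⟩, fun _ _ => rfl⟩
    by_cases hP : IsClopen P ∧ P.Nonempty
    · obtain ⟨x, hx⟩ := hP.2
      obtain ⟨y, hy, hyx⟩ : ∃ y ∈ P, y ≠ x := by
        by_contra! hcon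
        have : P = {x} := Subset.antisymm hcon (singleton_subset_iff.2 hx)
        exact hiso x (this ▸ hP.1.isOpen)
      obtain ⟨V, hV, hxV, hyV⟩ := exists_isClopen_of_totally_separated hyx.symm
      exact ⟨V, fun _ _ => ⟨hV, ⟨x, hx, hxV⟩, ⟨y, hy, hyV⟩⟩, fun h1 h2 => absurd ⟨h1, h2⟩ h⟩
    · exact ⟨∅, fun h1 h2 => absurd ⟨h1, h2⟩ hP, fun h1 h2 => absurd ⟨h1, h2⟩ h⟩
  choose S hS1 hS2 using key
  exact ⟨S, fun n P h1 h2 => (hS1 n P h1 h2).1, fun n P h1 h2 => (hS1 n P h1 h2).2.1,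
    fun n P h1 h2 => (hS1 n P h1 h2).2.2, hS2⟩

open Classical in
/-- The stage-`n` cell containing `x`, obtained by splitting the whole space `n` times. -/
noncomputable def cell {T : Type*} (S : ℕ → Set T → Set T) : ℕ → T → Set T
  | 0, _ => univ
  | n + 1, x => if x ∈ S n (cell S n x) then cell S n x ∩ S n (cell S n x)
      else cell S n x \ S n (cell S n x)

open Classical in
/-- The itinerary of `x`: which half of the current cell it lies in, at each stage. -/
noncomputable def code {T : Type*} (S : ℕ → Set T → Set T) (x : T) (n : ℕ) : Bool :=
  decide (x ∈ S n (cell S n x))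

section Code

variable {T : Type*} {S : ℕ → Set T → Set T}

lemma mem_cell (n : ℕ) (x : T) : x ∈ cell S n x := by
  induction n with
  | zero => exact mem_univ x
  | succ n ih =>
    rw [cell]
    split_ifs with h
    · exact ⟨ih, h⟩
    · exact ⟨ih, h⟩

lemma cell_eq_of_code {x y : T} {n : ℕ} (h : ∀ k < n, code S y k = code S x k) :
    cell S n y = cell S n x := by
  induction n with
  | zero => rfl
  | succ n ih =>
    have e := ih fun k hk => h k (hk.trans n.lt_succ_self)
    have h' := h n n.lt_succ_self
    simp only [code, decide_eq_decide, e] at h'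
    rw [cell, cell, e]
    by_cases hx : x ∈ S n (cell S n x)
    · rw [if_pos hx, if_pos (h'.2 hx)]
    · rw [if_neg hx, if_neg (mt h'.1 hx)]

lemma code_eq_of_mem {x y : T} {n : ℕ} (h : y ∈ cell S n x) :
    cell S n y = cell S n x ∧ ∀ k < n, code S y k = code S x k := by
  induction n with
  | zero => exact ⟨rfl, fun k hk => absurd hk k.not_lt_zero⟩
  | succ n ih =>
    have hy : y ∈ cell S n x := by
      rw [cell] at h
      split_ifs at h
      · exact h.1
      · exact h.1
    obtain ⟨e, hk⟩ := ih hy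
    have hiff : y ∈ S n (cell S n x) ↔ x ∈ S n (cell S n x) := by
      rw [cell] at h
      split_ifs at h with hx
      · exact ⟨fun _ => hx, fun _ => h.2⟩
      · exact ⟨fun hy => absurd hy h.2, fun hx' => absurd hx' hx⟩
    have hc : ∀ k < n + 1, code S y k = code S x k := by
      intro k hk'
      rcases Nat.lt_succ_iff_lt_or_eq.1 hk' with h1 | rfl
      · exact hk k h1
      · simp only [code, decide_eq_decide, e, hiff]
    exact ⟨cell_eq_of_code hc, hc⟩

variable [TopologicalSpace T] {U : ℕ → Set T}

lemma isClopen_cell (hS : IsSplitter U S) (n : ℕ) (x : T) : IsClopen (cell S n x) := by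
  induction n with
  | zero => exact isClopen_univ
  | succ n ih =>
    have h := hS.isClopen n _ ih ⟨x, mem_cell n x⟩
    rw [cell]
    split_ifs
    · exact ih.inter h
    · exact ih.diff h

lemma continuous_code (hS : IsSplitter U S) : Continuous (code S) := by
  refine continuous_pi fun n => ?_
  refine (IsLocallyConstant.iff_exists_open _).2 (fun x => ?_) |>.continuous
  exact ⟨cell S (n + 1) x, (isClopen_cell hS _ x).isOpen, mem_cell _ x,
    fun y hy => (code_eq_of_mem hy).2 n n.lt_succ_self⟩

/-- When the `U n` exhaust the clopen sets, each pair of points is eventually split: at the stage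
of a clopen set separating them, a common cell would be cut along that set. -/
lemma injective_code [T2Space T] [CompactSpace T] [TotallyDisconnectedSpace T]
    (hS : IsSplitter U S) (hU : ∀ V, IsClopen V → ∃ n, U n = V) :
    Function.Injective (code S) := by
  intro x y hxy
  by_contra hne
  obtain ⟨V, hV, hxV, hyV⟩ := exists_isClopen_of_totally_separated hne
  obtain ⟨n, rfl⟩ := hU V hV
  have e : cell S n y = cell S n x := cell_eq_of_code fun k _ => congrFun hxy.symm k
  have hy : y ∈ cell S n x := e ▸ mem_cell n y
  have hs := hS.eq n (cell S n x) ⟨x, mem_cell n x, hxV⟩ ⟨y, hy, hyV⟩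
  have h' := congrFun hxy n
  simp only [code, decide_eq_decide, e, hs] at h'
  exact hyV (h'.1 hxV)

lemma exists_code_eq [Nonempty T] (hS : IsSplitter U S) (b : ℕ → Bool) (n : ℕ) :
    ∃ x, ∀ k < n, code S x k = b k := by
  induction n with
  | zero => exact ⟨Classical.arbitrary T, fun k hk => absurd hk k.not_lt_zero⟩
  | succ n ih =>
    obtain ⟨x, hx⟩ := ih
    have hcl := isClopen_cell hS n x
    have hne : (cell S n x).Nonempty := ⟨x, mem_cell n x⟩
    obtain ⟨y, hy, hyn⟩ : ∃ y ∈ cell S n x, (y ∈ S n (cell S n x) ↔ b n = true) := by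
      cases hb : b n
      · obtain ⟨y, hy⟩ := hS.diff n _ hcl hne
        exact ⟨y, hy.1, by simp [hy.2]⟩
      · obtain ⟨y, hy⟩ := hS.inter n _ hcl hne
        exact ⟨y, hy.1, by simp [hy.2]⟩
    obtain ⟨e, hk⟩ := code_eq_of_mem hy
    refine ⟨y, fun k hk' => ?_⟩
    rcases Nat.lt_succ_iff_lt_or_eq.1 hk' with h1 | rfl
    · rw [hk k h1, hx k h1]
    · rw [code, e]
      simp [hyn]

/-- By compactness, as every finite itinerary occurs. -/
lemma surjective_code [Nonempty T] [CompactSpace T] (hS : IsSplitter U S) :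
    Function.Surjective (code S) := by
  have hcl : IsClosed (range (code S)) := (isCompact_range (continuous_code hS)).isClosed
  intro b
  choose x hx using exists_code_eq hS b
  change b ∈ range (code S)
  refine hcl.mem_of_tendsto (b := Filter.atTop) (f := fun n => code S (x n)) ?_
    (Filter.Eventually.of_forall fun n => mem_range_self _)
  refine tendsto_pi_nhds.2 fun k => tendsto_const_nhds.congr' ?_
  filter_upwards [Filter.eventually_gt_atTop k] with n hn
  exact (hx n k hn).symm

end Code

/-- Brouwer's characterisation of the Cantor space. -/
lemma nonempty_homeomorph_cantor (T : Type*) [TopologicalSpace T] [T2Space T] [CompactSpace T]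
    [TotallyDisconnectedSpace T] [SecondCountableTopology T] [Nonempty T]
    (hiso : NoIsolatedPoints T) : Nonempty (T ≃ₜ (ℕ → Bool)) := by
  have hcount : Countable (TopologicalSpace.Clopens T) :=
    TopologicalSpace.Clopens.countable_iff_secondCountable.2 inferInstance
  obtain ⟨u, hu⟩ := exists_surjective_nat (TopologicalSpace.Clopens T)
  obtain ⟨S, hS⟩ := exists_isSplitter hiso (U := fun n => (u n : Set T)) fun n => (u n).isClopen
  have hinj := injective_code hS fun V hV => by
    obtain ⟨n, hn⟩ := hu ⟨V, hV⟩
    exact ⟨n, by simp [hn]⟩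
  exact ⟨(continuous_code hS).homeoOfEquivCompactToT2
    (f := Equiv.ofBijective _ ⟨hinj, surjective_code hS⟩)⟩

lemma IsMinMap.conj {T T' : Type*} [TopologicalSpace T] [TopologicalSpace T'] {g : T → T}
    (hg : IsMinMap g) (e : T ≃ₜ T') : IsMinMap (e ∘ g ∘ e.symm) := by
  refine ⟨e.continuous.comp (hg.1.comp e.symm.continuous), fun N hN hne hi => ?_⟩
  have h := hg.2 (e ⁻¹' N) (hN.preimage e.continuous) (hne.preimage e.surjective) (fun x hx => by
    simpa using hi hx)
  refine eq_univ_of_univ_subset ?_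
  rw [← e.surjective.range_eq]
  exact preimage_eq_univ_iff.1 h

/-- The dyadic odometer. -/
lemma isMinMap_odometer : IsMinMap fun x : ℤ_[2] => x + 1 := by
  refine ⟨by fun_prop, fun N hN ⟨x, hx⟩ hi => ?_⟩
  have hd : DenseRange fun n : ℕ => x + (n : ℤ_[2]) :=
    (Homeomorph.addLeft x).surjective.denseRange.comp PadicInt.denseRange_natCast
      (Homeomorph.addLeft x).continuous
  have hsub : range (fun n : ℕ => x + (n : ℤ_[2])) ⊆ N := by
    rintro _ ⟨n, rfl⟩
    induction n with
    | zero => simpa using hx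
    | succ n ih => simpa [add_assoc] using hi ih
  exact eq_univ_of_univ_subset (hd.closure_range ▸ hN.closure_subset_iff.2 hsub)

lemma noIsolatedPoints_padicInt : NoIsolatedPoints ℤ_[2] := by
  intro y hy
  have hd : DenseRange fun n : ℕ => y + 1 + (n : ℤ_[2]) :=
    (Homeomorph.addLeft (y + 1)).surjective.denseRange.comp PadicInt.denseRange_natCast
      (Homeomorph.addLeft (y + 1)).continuous
  obtain ⟨n, hn⟩ := hd.exists_mem_open hy (singleton_nonempty y)
  have h : ((n + 1 : ℕ) : ℤ_[2]) = 0 := by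
    have : y + 1 + (n : ℤ_[2]) = y := hn
    push_cast
    linear_combination this
  exact n.succ_ne_zero (Nat.cast_eq_zero.1 h)

lemma exists_isMinMap_of_cantor (T : Type*) [TopologicalSpace T] [T2Space T] [CompactSpace T]
    [TotallyDisconnectedSpace T] [SecondCountableTopology T] [Nonempty T]
    (hiso : NoIsolatedPoints T) : ∃ g : T → T, IsMinMap g := by
  obtain ⟨e⟩ := nonempty_homeomorph_cantor T hiso
  obtain ⟨e'⟩ := nonempty_homeomorph_cantor ℤ_[2] noIsolatedPoints_padicInt
  exact ⟨_, isMinMap_odometer.conj (e'.trans e.symm)⟩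

lemma exists_isMinMap_of_finite (T : Type*) [TopologicalSpace T] [T1Space T] [Finite T]
    [Nonempty T] : ∃ g : T → T, IsMinMap g := by
  obtain ⟨n, ⟨e₀⟩⟩ := Finite.exists_equiv_fin T
  have hn : n ≠ 0 := by
    rintro rfl
    exact (e₀ (Classical.arbitrary T)).elim0
  have : NeZero n := ⟨hn⟩
  let e : T ≃ ZMod n := e₀.trans (ZMod.finEquiv n).toEquiv
  refine ⟨fun x => e.symm (e x + 1), continuous_of_discreteTopology, fun N _ ⟨x, hx⟩ hi => ?_⟩
  have h : ∀ k : ℕ, e.symm (e x + k) ∈ N := by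
    intro k
    induction k with
    | zero => simpa using hx
    | succ k ih => simpa [add_assoc] using hi ih
  refine eq_univ_of_forall fun y => ?_
  have := h (e y - e x).val
  simpa using this

lemma exists_minimalSystemOn_of_finite_or_cantor {X : Type*} [TopologicalSpace X]
    [TopologicalSpace.MetrizableSpace X] {M : Set X}
    (hM : (M.Finite ∧ M.Nonempty) ∨ IsCantorSet M) :
    IsCompact M ∧ ∃ F : X → X, ContinuousOn F M ∧ MinimalSystemOn F M := by
  rcases hM with ⟨hfin, hne⟩ | ⟨hne, hc, htd, hiso⟩
  · have := hfin.to_subtype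
    have := hne.to_subtype
    obtain ⟨g, hg⟩ := exists_isMinMap_of_finite M
    exact ⟨hfin.isCompact, exists_minimalSystemOn hfin.isCompact hne hg⟩
  · have := hne.to_subtype
    have := isCompact_iff_compactSpace.1 hc
    have : TotallyDisconnectedSpace M := totallyDisconnectedSpace_subtype_iff.2 htd
    let _ := TopologicalSpace.metrizableSpaceMetric M
    obtain ⟨g, hg⟩ := exists_isMinMap_of_cantor M hiso
    exact ⟨hc, exists_minimalSystemOn hc hne hg⟩

/-! ### Paths in locally connected compacta -/

/-- `y` is reached from `x` by at most `N` steps inside `A`, each shorter than `δ`. The chain is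
indexed by all of `ℕ` and stays at `y` from time `N` on. -/
def ChainIn {L : Type*} [MetricSpace L] (A : Set L) (δ : ℝ) (N : ℕ) (x y : L) : Prop :=
  ∃ c : ℕ → L, c 0 = x ∧ (∀ i, N ≤ i → c i = y) ∧ (∀ i, c i ∈ A) ∧ ∀ i, dist (c i) (c (i + 1)) < δ

section Chain

variable {L : Type*} [MetricSpace L] {A B : Set L} {δ : ℝ} {N : ℕ} {x y z : L}

lemma ChainIn.mono (h : ChainIn A δ N x y) (hAB : A ⊆ B) {N' : ℕ} (hN : N ≤ N') :
    ChainIn B δ N' x y := by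
  obtain ⟨c, h0, hy, hA, hs⟩ := h
  exact ⟨c, h0, fun i hi => hy i (hN.trans hi), fun i => hAB (hA i), hs⟩

lemma ChainIn.cons (h : ChainIn A δ N x y) (hz : z ∈ A) (hzx : dist z x < δ) :
    ChainIn A δ (N + 1) z y := by
  obtain ⟨c, h0, hy, hA, hs⟩ := h
  refine ⟨fun i => Nat.casesOn i z c, rfl, fun i hi => ?_, fun i => ?_, fun i => ?_⟩
  · obtain ⟨j, rfl⟩ := Nat.exists_eq_add_of_le hi
    rw [show N + 1 + j = (N + j) + 1 by omega]
    exact hy _ (by omega)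
  · cases i
    · exact hz
    · exact hA _
  · cases i
    · simpa [h0] using hzx
    · exact hs _

lemma ChainIn.snoc (h : ChainIn A δ N x y) (hz : z ∈ A) (hyz : dist y z < δ) (hδ : 0 < δ) :
    ChainIn A δ (N + 1) x z := by
  obtain ⟨c, h0, hy, hA, hs⟩ := h
  refine ⟨fun i => if i ≤ N then c i else z, by simp [h0], fun i hi => ?_, fun i => ?_,
    fun i => ?_⟩
  · dsimp only
    rw [if_neg (by omega)]
  · change (if i ≤ N then c i else z) ∈ A
    split_ifs
    · exact hA i
    · exact hz
  · dsimp only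
    rcases lt_trichotomy i N with h | rfl | h
    · rw [if_pos (by omega), if_pos (by omega)]
      exact hs i
    · rw [if_pos le_rfl, if_neg (by omega), hy i le_rfl]
      exact hyz
    · rw [if_neg (by omega), if_neg (by omega), dist_self]
      exact hδ

lemma IsPreconnected.exists_chainIn (hA : IsPreconnected A) (hδ : 0 < δ) (hx : x ∈ A)
    (hy : y ∈ A) : ∃ N, ChainIn A δ N x y := by
  let r : L → L → Prop := fun a b => a ∈ A ∧ b ∈ A ∧ dist a b < δ
  have hsymm : Std.Symm r := ⟨fun a b h => ⟨h.2.1, h.1, by rw [dist_comm]; exact h.2.2⟩⟩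
  have h : Relation.ReflTransGen r x y := by
    refine hA.induction₂ (Relation.ReflTransGen r) (fun a ha => ?_)
      (fun a b c _ _ _ h1 h2 => h1.trans h2) (fun a b _ _ h => ?_) hx hy
    · filter_upwards [self_mem_nhdsWithin, mem_nhdsWithin_of_mem_nhds (Metric.ball_mem_nhds a hδ)]
        with b hb hb'
      exact Relation.ReflTransGen.single ⟨ha, hb, by rw [dist_comm]; exact hb'⟩
    · exact symm h
  induction h using Relation.ReflTransGen.head_induction_on with
  | refl => exact ⟨0, fun _ => y, rfl, fun _ _ => rfl, fun _ => hy, fun _ => by simpa using hδ⟩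
  | head h1 _ ih =>
    obtain ⟨N, hN⟩ := ih h1.2.1
    exact ⟨N + 1, hN.cons h1.1 h1.2.2⟩

variable [CompactSpace L] [LocallyConnectedSpace L]

/-- Uniform local connectedness. -/
lemma exists_delta_preconnected {ε : ℝ} (hε : 0 < ε) : ∃ δ > 0, ∀ x y : L, dist x y < δ →
    ∃ C : Set L, IsPreconnected C ∧ x ∈ C ∧ y ∈ C ∧ C ⊆ Metric.ball x ε := by
  have h : ∀ z : L, ∃ V ⊆ Metric.ball z (ε / 2), IsOpen V ∧ z ∈ V ∧ IsConnected V := fun z =>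
    locallyConnectedSpace_iff_subsets_isOpen_isConnected.1 inferInstance z _
      (Metric.ball_mem_nhds z (half_pos hε))
  choose V hVb hVo hzV hVc using h
  obtain ⟨δ, hδ, hleb⟩ := lebesgue_number_lemma_of_metric (isCompact_univ (X := L)) hVo
    fun z _ => mem_iUnion.2 ⟨z, hzV z⟩
  refine ⟨δ, hδ, fun x y hxy => ?_⟩
  obtain ⟨z, hz⟩ := hleb x (mem_univ x)
  have hx : x ∈ V z := hz (Metric.mem_ball_self hδ)
  refine ⟨V z, (hVc z).isPreconnected, hx, hz (by rwa [Metric.mem_ball, dist_comm]),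
    fun w hw => ?_⟩
  have h1 := Metric.mem_ball.1 (hVb z hw)
  have h2 := Metric.mem_ball.1 (hVb z hx)
  rw [Metric.mem_ball]
  linarith [dist_triangle_right w x z]

/-- Nearby points are joined by short-step chains that stay close and whose length depends only
on the step size. -/
lemma exists_delta_chain {ε : ℝ} (hε : 0 < ε) : ∃ δ > 0, ∀ δ' > 0, ∃ N, ∀ x y : L,
    dist x y < δ → ChainIn (Metric.ball x ε) δ' N x y := by
  obtain ⟨δ, hδ, hC⟩ := exists_delta_preconnected (L := L) (ε := ε / 3) (by linarith)
  refine ⟨δ / 2, half_pos hδ, fun δ' hδ' => ?_⟩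
  let K : Set (L × L) := {p | dist p.1 p.2 ≤ δ / 2}
  have hK : IsCompact K :=
    (isClosed_le (continuous_fst.dist continuous_snd) continuous_const).isCompact
  have key : ∃ N, ∀ p ∈ K, ChainIn (Metric.ball p.1 ε) δ' N p.1 p.2 := by
    refine hK.induction_on (p := fun s : Set (L × L) =>
      ∃ N, ∀ p ∈ s, ChainIn (Metric.ball p.1 ε) δ' N p.1 p.2) ⟨0, by simp⟩
      (fun s t hst ⟨N, hN⟩ => ⟨N, fun p hp => hN p (hst hp)⟩)
      (fun s t ⟨N, hN⟩ ⟨N', hN'⟩ => ⟨max N N', fun p hp => ?_⟩) fun p hp => ?_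
    · rcases hp with hp | hp
      · exact (hN p hp).mono Subset.rfl (le_max_left _ _)
      · exact (hN' p hp).mono Subset.rfl (le_max_right _ _)
    · have hp' : dist p.1 p.2 ≤ δ / 2 := hp
      obtain ⟨C, hCp, h1, h2, hCb⟩ := hC p.1 p.2 (by linarith)
      obtain ⟨N, hN⟩ := hCp.exists_chainIn hδ' h1 h2
      have hm : 0 < min δ' (ε / 3) := lt_min hδ' (by linarith)
      refine ⟨Metric.ball p (min δ' (ε / 3)),
        mem_nhdsWithin_of_mem_nhds (Metric.ball_mem_nhds p hm), N + 1 + 1, fun q hq => ?_⟩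
      rw [Metric.mem_ball, Prod.dist_eq, max_lt_iff, lt_min_iff, lt_min_iff] at hq
      obtain ⟨⟨hq1, hq2⟩, hq3, hq4⟩ := hq
      have hp2 := Metric.mem_ball.1 (hCb h2)
      have hsub : C ⊆ Metric.ball q.1 ε := fun w hw => by
        have := Metric.mem_ball.1 (hCb hw)
        rw [Metric.mem_ball]
        linarith [dist_triangle_right w q.1 p.1]
      refine ((hN.mono hsub le_rfl).cons (Metric.mem_ball_self hε) hq1).snoc ?_
        (by rwa [dist_comm]) hδ'
      rw [Metric.mem_ball]
      linarith [dist_triangle_right q.2 q.1 p.1, dist_triangle q.2 p.2 p.1]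
  obtain ⟨N, hN⟩ := key
  exact ⟨N, fun x y hxy => hN (x, y) hxy.le⟩

lemma Nat.floor_le_floor_add_one {a b : ℝ} (h : |a - b| < 1) : ⌊a⌋₊ ≤ ⌊b⌋₊ + 1 := by
  have h1 := (abs_lt.1 h).2
  have h2 := Nat.lt_floor_add_one b
  have : ⌊a⌋₊ < ⌊b⌋₊ + 2 := (Nat.floor_lt' (by omega)).2 (by push_cast; linarith)
  omega

/-- A sequence with small jumps in a locally connected compactum is interpolated by a continuous
curve staying close to it: refine the sequence by chains of equal length and shrinking step size,
and pass to the uniform limit of the resulting step functions. -/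
lemma exists_interpolation {e : ℝ} (he : 0 < e) : ∃ δ > 0, ∀ c : ℕ → L,
    (∀ i, dist (c i) (c (i + 1)) < δ) → ∃ g : ℝ → L, Continuous g ∧ (∀ j : ℕ, g j = c j) ∧
      ∀ t, dist (g t) (c ⌊t⌋₊) ≤ e := by
  -- the errors `E k` of the successive refinements add up to `e`
  let E : ℕ → ℝ := fun k => e / 2 / 2 ^ k
  have hE : ∀ k, 0 < E k := fun k => by positivity
  choose D hD hDch using fun k => exists_delta_chain (L := L) (hE k)
  let δ : ℕ → ℝ := fun k => min (D k) (E k)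
  have hδ : ∀ k, 0 < δ k := fun k => lt_min (hD k) (hE k)
  choose N₀ hN₀ using fun k => hDch k (δ (k + 1)) (hδ _)
  let N : ℕ → ℕ := fun k => N₀ k + 1
  have hchain : ∀ k (x y : L), ∃ c : ℕ → L, dist x y < δ k → c 0 = x ∧ c (N k) = y ∧
      (∀ i, dist (c i) x < E k) ∧ ∀ i, dist (c i) (c (i + 1)) < δ (k + 1) := by
    intro k x y
    by_cases h : dist x y < δ k
    · obtain ⟨c, h0, h1, h2, h3⟩ := hN₀ k x y (h.trans_le (min_le_left _ _))
      exact ⟨c, fun _ => ⟨h0, h1 _ (Nat.le_succ _), fun i => h2 i, h3⟩⟩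
    · exact ⟨fun _ => x, fun h' => absurd h' h⟩
  choose ch hch using hchain
  refine ⟨δ 0, hδ 0, fun c hc => ?_⟩
  -- `C k` is the `k`-th refinement of `c`, with `P k` steps for each step of `c`
  obtain ⟨C, hC0, hCs⟩ : ∃ C : ℕ → ℕ → L, C 0 = c ∧
      ∀ k m, C (k + 1) m = ch k (C k (m / N k)) (C k (m / N k + 1)) (m % N k) :=
    ⟨fun k => Nat.rec c (fun k Ck m => ch k (Ck (m / N k)) (Ck (m / N k + 1)) (m % N k)) k, rfl,
      fun _ _ => rfl⟩
  obtain ⟨P, hP0, hPs⟩ : ∃ P : ℕ → ℕ, P 0 = 1 ∧ ∀ k, P (k + 1) = P k * N k :=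
    ⟨fun k => Nat.rec 1 (fun k p => p * N k) k, rfl, fun _ => rfl⟩
  have hNpos : ∀ k, 0 < N k := fun k => Nat.succ_pos _
  have hP : ∀ k, 0 < P k := by
    intro k
    induction k with
    | zero => exact hP0 ▸ Nat.one_pos
    | succ k ih => rw [hPs]; exact Nat.mul_pos ih (hNpos k)
  have hstep : ∀ k m, dist (C k m) (C k (m + 1)) < δ k := by
    intro k
    induction k with
    | zero => exact hC0 ▸ hc
    | succ k ih =>
      intro m
      obtain ⟨h0, h1, -, h3⟩ := hch k _ _ (ih (m / N k))
      have hlt := Nat.mod_lt m (hNpos k)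
      have hdm := Nat.div_add_mod m (N k)
      rcases (Nat.succ_le_of_lt hlt).lt_or_eq with h | h
      · -- `m` and `m + 1` lie in the same block
        have hd : (m + 1) / N k = m / N k := by
          rw [Nat.div_eq_iff (hNpos k)]
          constructor
          · rw [mul_comm]; omega
          · rw [mul_comm]; omega
        have hm : (m + 1) % N k = m % N k + 1 := by
          have := Nat.div_add_mod (m + 1) (N k)
          rw [hd] at this
          omega
        rw [hCs, hCs, hd, hm]
        exact h3 _
      · -- `m + 1` starts the next block
        have hmul : m + 1 = N k * (m / N k + 1) := by
          rw [mul_add, mul_one]; omega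
        have hd : (m + 1) / N k = m / N k + 1 := by
          rw [hmul, Nat.mul_div_cancel_left _ (hNpos k)]
        have hm : (m + 1) % N k = 0 := by rw [hmul, Nat.mul_mod_right]
        rw [hCs, hCs, hd, hm, (hch k _ _ (ih (m / N k + 1))).1]
        have h4 := h3 (m % N k)
        rwa [show m % N k + 1 = N k from h, h1] at h4
  have hclose : ∀ k m, dist (C (k + 1) m) (C k (m / N k)) < E k := fun k m => by
    rw [hCs]
    exact (hch k _ _ (hstep k (m / N k))).2.2.1 _
  have hnode : ∀ k j, C k (j * P k) = c j := by
    intro k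
    induction k with
    | zero => intro j; rw [hC0, hP0, mul_one]
    | succ k ih =>
      intro j
      rw [hCs, hPs, ← mul_assoc, Nat.mul_div_cancel _ (hNpos k), Nat.mul_mod_left,
        (hch k _ _ (hstep k _)).1, ih]
  let G : ℕ → ℝ → L := fun k t => C k ⌊t * (P k : ℝ)⌋₊
  have hG : ∀ t k, dist (G k t) (G (k + 1) t) ≤ e / 2 / 2 ^ k := by
    intro t k
    have h : ⌊t * P (k + 1)⌋₊ / N k = ⌊t * P k⌋₊ := by
      rw [← Nat.floor_div_natCast, hPs]
      have : (N k : ℝ) ≠ 0 := Nat.cast_ne_zero.2 (hNpos k).ne'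
      congr 1
      push_cast
      field_simp
    have := hclose k ⌊t * P (k + 1)⌋₊
    rw [h, dist_comm] at this
    exact this.le
  choose g hg using fun t => cauchySeq_tendsto_of_complete (cauchySeq_of_le_geometric_two (hG t))
  have hgk : ∀ t k, dist (G k t) (g t) ≤ e / 2 ^ k := fun t k =>
    dist_le_of_le_geometric_two_of_tendsto (hG t) (hg t) k
  refine ⟨g, Metric.continuous_iff.2 fun t η hη => ?_, fun j => ?_, fun t => ?_⟩
  · obtain ⟨k, hk⟩ : ∃ k, e / 2 ^ k < η / 3 := by
      obtain ⟨k, hk⟩ := exists_pow_lt_of_lt_one (show 0 < η / 3 / e by positivity)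
        (show (1 / 2 : ℝ) < 1 by norm_num)
      refine ⟨k, ?_⟩
      rw [lt_div_iff₀ he] at hk
      rw [div_eq_mul_inv, ← inv_pow, mul_comm]
      simpa using hk
    have hPk : (0 : ℝ) < P k := Nat.cast_pos.2 (hP k)
    refine ⟨1 / P k, by positivity, fun s hs => ?_⟩
    have hst : |s * (P k : ℝ) - t * (P k : ℝ)| < 1 := by
      rw [← sub_mul, abs_mul, abs_of_pos hPk]
      rw [Real.dist_eq, lt_div_iff₀ hPk] at hs
      exact hs
    have h1 := Nat.floor_le_floor_add_one hst
    have h2 := Nat.floor_le_floor_add_one (a := t * (P k : ℝ)) (b := s * (P k : ℝ))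
      (by rwa [abs_sub_comm])
    have hGd : dist (G k s) (G k t) < E k := by
      change dist (C k _) (C k _) < _
      have hδE : δ k ≤ E k := min_le_right _ _
      obtain h | h | h : ⌊s * (P k : ℝ)⌋₊ = ⌊t * (P k : ℝ)⌋₊ + 1 ∨
        ⌊s * (P k : ℝ)⌋₊ = ⌊t * (P k : ℝ)⌋₊ ∨
        ⌊t * (P k : ℝ)⌋₊ = ⌊s * (P k : ℝ)⌋₊ + 1 := by omega
      · rw [h, dist_comm]
        exact (hstep k _).trans_le hδE
      · rw [h, dist_self]
        exact hE k
      · rw [h]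
        exact (hstep k _).trans_le hδE
    have hEk : E k ≤ e / 2 ^ k := by
      change e / 2 / 2 ^ k ≤ _
      gcongr
      linarith
    have h3 := hgk s k
    have h4 := hgk t k
    rw [dist_comm] at h3
    linarith [dist_triangle4 (g s) (G k s) (G k t) (g t)]
  · refine tendsto_nhds_unique (hg j) (tendsto_const_nhds.congr fun k => ?_)
    have : ⌊(j : ℝ) * P k⌋₊ = j * P k := by rw [← Nat.cast_mul, Nat.floor_natCast]
    change c j = C k _
    rw [this, hnode]
  · have h := hgk t 0
    have h0 : G 0 t = c ⌊t⌋₊ := by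
      simp [G, hC0, hP0]
    rw [h0, dist_comm] at h
    simpa using h

end Chain

/-! ### The coordinate along the free interval -/

/-- The complement of `L` is parametrised by `(0, 1]`: `θ` is a continuous function on `X` with
zero set `L`, its restriction to `Lᶜ` is a homeomorphism onto `(0, 1]` with inverse `φ`, and `Lᶜ`
is dense. -/
structure Coord {X : Type*} [TopologicalSpace X] (L : Set X) (θ : X → ℝ) (φ : ℝ → X) : Prop where
  contθ : Continuous θ
  zero_iff : ∀ x, θ x = 0 ↔ x ∈ L
  mem : ∀ x, x ∉ L → θ x ∈ Ioc 0 1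
  contφ : ContinuousOn φ (Ioc 0 1)
  left : ∀ x, x ∉ L → φ (θ x) = x
  right : ∀ t ∈ Ioc (0 : ℝ) 1, θ (φ t) = t
  dense : Dense Lᶜ

lemma IsRaySet.isPreconnected {X : Type*} [TopologicalSpace X] {A : Set X} (h : IsRaySet A) :
    IsPreconnected A := by
  obtain ⟨e⟩ := h
  have h1 : PreconnectedSpace (Ici (0 : ℝ)) := Subtype.preconnectedSpace isPreconnected_Ici
  have h2 := isPreconnected_range (continuous_subtype_val.comp e.symm.continuous)
  rwa [e.symm.surjective.range_comp, Subtype.range_coe] at h2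

section Interval

variable {X : Type*} [TopologicalSpace X] {J A : Set X} {E : X → ℝ}

/-- A proper connected subset of an open interval stays away from one of its ends. -/
lemma away_of_ne (hE : ContinuousOn E J) (hinj : InjOn E J) (him : E '' J = Ioo 0 1)
    (hA : IsPreconnected A) (hAJ : A ⊆ J) (hne : A ≠ J) :
    (∃ α < 1, ∀ x ∈ A, E x ≤ α) ∨ ∃ β > 0, ∀ x ∈ A, β ≤ E x := by
  by_contra! h
  obtain ⟨h1, h2⟩ := h
  refine hne (hAJ.antisymm fun y hy => ?_)
  have hy' : E y ∈ Ioo 0 1 := him ▸ mem_image_of_mem E hy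
  obtain ⟨x₁, hx₁, h₁⟩ := h1 _ hy'.2
  obtain ⟨x₂, hx₂, h₂⟩ := h2 _ hy'.1
  obtain ⟨z, hz, hzy⟩ := hA.intermediate_value hx₂ hx₁ (hE.mono hAJ) ⟨h₂.le, h₁.le⟩
  exact hinj (hAJ hz) hy hzy ▸ hz

open Classical in
/-- Extending a coordinate on `J` by `0` on `L` and `1` at the point `r` gives a continuous
function, provided the rays `JL`, `JR` avoid the ends `1` and `0` respectively. -/
lemma exists_theta [T2Space X] {L JL JR : Set X} {r : X} (hE : ContinuousOn E J)
    (hinj : InjOn E J) (him : E '' J = Ioo 0 1)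
    (hcpt : ∀ a b, 0 < a → b < 1 → IsCompact (J ∩ E ⁻¹' Icc a b)) (hJ : IsOpen J)
    (huniv : ∀ x, x ∈ L ∨ x ∈ J ∨ x = r) (hLJ : Disjoint L J) (hrJ : r ∉ J) (hrL : r ∉ L)
    (hLR : JL ∪ JR = J) (hcL : IsClosed (L ∪ JL)) (hcR : IsClosed ({r} ∪ JR))
    {α β : ℝ} (hα : α < 1) (hβ : 0 < β) (hJL : ∀ x ∈ JL, E x ≤ α) (hJR : ∀ x ∈ JR, β ≤ E x) :
    ∃ θ : X → ℝ, Continuous θ ∧ (∀ x, θ x = 0 ↔ x ∈ L) ∧ (∀ x ∉ L, θ x ∈ Ioc 0 1) ∧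
      InjOn θ Lᶜ ∧ ∀ t ∈ Ioc (0 : ℝ) 1, ∃ x ∉ L, θ x = t := by
  let θ : X → ℝ := fun x => if x ∈ J then E x else if x ∈ L then 0 else 1
  have hθJ : ∀ x ∈ J, θ x = E x := fun x hx => if_pos hx
  have hθL : ∀ x ∈ L, θ x = 0 := fun x hx => by
    have : x ∉ J := disjoint_left.1 hLJ hx
    simp [θ, this, hx]
  have hθr : θ r = 1 := by simp [θ, hrJ, hrL]
  have hEJ : ∀ x ∈ J, E x ∈ Ioo 0 1 := fun x hx => him ▸ mem_image_of_mem E hx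
  have hnL : ∀ x ∉ L, x ∈ J ∨ x = r := fun x hx => (huniv x).resolve_left hx
  refine ⟨θ, continuous_iff_continuousAt.2 fun x => ?_, fun x => ⟨fun h => ?_, hθL x⟩,
    fun x hx => ?_, fun x hx y hy hxy => ?_, fun t ht => ?_⟩
  · rcases huniv x with hx | hx | rfl
    · rw [ContinuousAt, hθL x hx, Metric.tendsto_nhds]
      intro ε hε
      have hε' : 0 < min ε β := lt_min hε hβ
      have hcl := (hcpt (min ε β) α hε' hα).isClosed.union hcR
      have hxJ : x ∉ J := disjoint_left.1 hLJ hx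
      have hxn : x ∉ (J ∩ E ⁻¹' Icc (min ε β) α) ∪ ({r} ∪ JR) := by
        rintro (h | h | h)
        · exact hxJ h.1
        · exact hrL (h ▸ hx)
        · exact hxJ (hLR ▸ Or.inr h)
      filter_upwards [hcl.isOpen_compl.mem_nhds hxn] with y hy
      rcases huniv y with hyL | hyJ | rfl
      · simpa [hθL y hyL] using hε
      · have hyl : y ∈ JL := by
          rcases hLR.symm ▸ hyJ with h | h
          · exact h
          · exact absurd (Or.inr (Or.inr h)) hy
        have hlt : E y < min ε β := by
          by_contra! hge
          exact hy (Or.inl ⟨hyJ, hge, hJL y hyl⟩)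
        rw [hθJ y hyJ, Real.dist_eq, sub_zero, abs_of_pos (hEJ y hyJ).1]
        exact hlt.trans_le (min_le_left _ _)
      · exact absurd (Or.inr (Or.inl rfl)) hy
    · refine (hE.continuousAt (hJ.mem_nhds hx)).congr ?_
      filter_upwards [hJ.mem_nhds hx] with y hy using (hθJ y hy).symm
    · rw [ContinuousAt, hθr, Metric.tendsto_nhds]
      intro ε hε
      have hε' : 0 < ε := hε
      have hcl := (hcpt β (1 - ε) hβ (by linarith)).isClosed.union hcL
      have hxn : x ∉ (J ∩ E ⁻¹' Icc β (1 - ε)) ∪ (L ∪ JL) := by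
        rintro (h | h | h)
        · exact hrJ h.1
        · exact hrL h
        · exact hrJ (hLR ▸ Or.inl h)
      filter_upwards [hcl.isOpen_compl.mem_nhds hxn] with y hy
      rcases huniv y with hyL | hyJ | rfl
      · exact absurd (Or.inr (Or.inl hyL)) hy
      · have hyr : y ∈ JR := by
          rcases hLR.symm ▸ hyJ with h | h
          · exact absurd (Or.inr (Or.inr h)) hy
          · exact h
        have hlt : 1 - ε < E y := by
          by_contra! hge
          exact hy (Or.inl ⟨hyJ, hJR y hyr, hge⟩)
        rw [hθJ y hyJ, Real.dist_eq, abs_sub_comm, abs_of_pos (by linarith [(hEJ y hyJ).2])]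
        linarith
      · simpa [hθr] using hε
  · rcases huniv x with hx | hx | rfl
    · exact hx
    · rw [hθJ x hx] at h
      exact absurd h (hEJ x hx).1.ne'
    · rw [hθr] at h
      exact absurd h one_ne_zero
  · rcases hnL x hx with hx | rfl
    · rw [hθJ x hx]
      exact Ioo_subset_Ioc_self (hEJ x hx)
    · rw [hθr]
      exact ⟨one_pos, le_rfl⟩
  · rcases hnL x hx with hx | rfl <;> rcases hnL y hy with hy | rfl
    · rw [hθJ x hx, hθJ y hy] at hxy
      exact hinj hx hy hxy
    · rw [hθJ x hx, hθr] at hxy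
      exact absurd hxy (hEJ x hx).2.ne
    · rw [hθJ y hy, hθr] at hxy
      exact absurd hxy (hEJ y hy).2.ne'
    · rfl
  · rcases ht.2.lt_or_eq with h | rfl
    · obtain ⟨x, hx, hxt⟩ : t ∈ E '' J := him ▸ ⟨ht.1, h⟩
      exact ⟨x, disjoint_right.1 hLJ hx, (hθJ x hx).trans hxt⟩
    · exact ⟨r, hrL, hθr⟩

end Interval

/-- The coordinate exists for continua of the class `𝒞` whose right end is a point off `L`. -/
lemma ClassC.exists_coord {X : Type*} [TopologicalSpace X] [CompactSpace X] [T2Space X]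
    {L J R : Set X} (hC : ClassC L J R) (hR : ∃ x, R = {x}) (hLR : Disjoint L R) :
    J ∪ R = Lᶜ ∧ ∃ θ φ, Coord L θ φ := by
  classical
  obtain ⟨r, rfl⟩ := hR
  have hrL : r ∉ L := disjoint_singleton_right.1 hLR
  have hrJ : r ∉ J := disjoint_singleton_left.1 hC.disjRJ
  have huniv : ∀ x, x ∈ L ∨ x ∈ J ∨ x = r := fun x => by
    have : x ∈ L ∪ J ∪ {r} := hC.union_eq ▸ mem_univ x
    rcases this with (h | h) | h
    exacts [Or.inl h, Or.inr (Or.inl h), Or.inr (Or.inr h)]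
  have hZ : J ∪ {r} = Lᶜ := by
    ext x
    constructor
    · rintro (h | h) hx
      · exact disjoint_left.1 hC.disjLJ hx h
      · exact hrL (h ▸ hx)
    · exact fun hx => (huniv x).resolve_left hx
  refine ⟨hZ, ?_⟩
  obtain ⟨e⟩ := hC.freeJ
  obtain ⟨JL, JR, hU, hJLr, hJRr, hcL, -, hcR, -⟩ := hC.rays
  have hJLs : JL ⊆ J := hU ▸ subset_union_left
  have hJRs : JR ⊆ J := hU ▸ subset_union_right
  have hJLne : JL ≠ J := by
    rintro rfl
    have : r ∈ L ∪ JL := hcL.isClosed.closure_subset_iff.2 subset_union_right (hC.denseJ r)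
    exact this.elim hrL hrJ
  have hJRne : JR ≠ J := by
    rintro rfl
    obtain ⟨x, hx⟩ := hC.connL.nonempty
    have : x ∈ {r} ∪ JR := hcR.isClosed.closure_subset_iff.2 subset_union_right (hC.denseJ x)
    exact this.elim (fun h => hrL (h ▸ hx)) (disjoint_left.1 hC.disjLJ hx)
  let E : X → ℝ := fun x => if h : x ∈ J then (e ⟨x, h⟩ : ℝ) else 0
  have hEv : ∀ x : J, E x = e x := fun x => by simp [E]
  have hEc : ContinuousOn E J := by
    rw [continuousOn_iff_continuous_domRestrict]
    have : J.domRestrict E = fun x => (e x : ℝ) := funext hEv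
    rw [this]
    exact continuous_subtype_val.comp e.continuous
  have hEi : InjOn E J := fun x hx y hy h => by
    rw [hEv ⟨x, hx⟩, hEv ⟨y, hy⟩] at h
    exact congrArg Subtype.val (e.injective (Subtype.ext h))
  have hEim : E '' J = Ioo 0 1 := by
    ext t
    constructor
    · rintro ⟨x, hx, rfl⟩
      rw [hEv ⟨x, hx⟩]
      exact (e _).2
    · intro ht
      exact ⟨e.symm ⟨t, ht⟩, (e.symm _).2, by rw [hEv]; simp⟩
  have hEcpt : ∀ a b, 0 < a → b < 1 → IsCompact (J ∩ E ⁻¹' Icc a b) := by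
    intro a b ha hb
    have h1 : IsCompact (Subtype.val ⁻¹' Icc a b : Set (Ioo (0 : ℝ) 1)) := by
      rw [Subtype.isCompact_iff, Subtype.image_preimage_coe, inter_eq_right.2]
      · exact isCompact_Icc
      · exact fun t ht => ⟨ha.trans_le ht.1, ht.2.trans_lt hb⟩
    have h2 := (h1.image e.symm.continuous).image continuous_subtype_val
    convert h2 using 1
    ext x
    constructor
    · rintro ⟨hx, hxE⟩
      refine ⟨⟨x, hx⟩, ⟨e ⟨x, hx⟩, ?_, by simp⟩, rfl⟩
      change (e ⟨x, hx⟩ : ℝ) ∈ Icc a b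
      rw [← hEv]
      exact hxE
    · rintro ⟨_, ⟨t, ht, rfl⟩, rfl⟩
      refine ⟨(e.symm t).2, ?_⟩
      change E _ ∈ Icc a b
      rw [hEv]
      simpa using ht
  -- up to reversing the coordinate, `JL` avoids the end `1` and `JR` avoids the end `0`
  obtain ⟨θ, hθc, hθ0, hθm, hθi, hθs⟩ : ∃ θ : X → ℝ, Continuous θ ∧ (∀ x, θ x = 0 ↔ x ∈ L) ∧
      (∀ x ∉ L, θ x ∈ Ioc 0 1) ∧ InjOn θ Lᶜ ∧ ∀ t ∈ Ioc (0 : ℝ) 1, ∃ x ∉ L, θ x = t := by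
    rcases away_of_ne hEc hEi hEim hJLr.isPreconnected hJLs hJLne with ⟨α, hα, h1⟩ | ⟨β, hβ, h1⟩ <;>
    rcases away_of_ne hEc hEi hEim hJRr.isPreconnected hJRs hJRne with ⟨α', hα', h2⟩ | ⟨β', hβ', h2⟩
    · exfalso
      obtain ⟨t, ht, ht1⟩ := exists_between (max_lt (max_lt hα hα') one_pos)
      obtain ⟨x, hx, rfl⟩ : t ∈ E '' J := hEim ▸ ⟨(le_max_right _ _).trans_lt ht, ht1⟩
      have ht' := (le_max_left _ _).trans_lt ht
      rcases hU.symm ▸ hx with h | h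
      · exact absurd (h1 x h) (not_le.2 ((le_max_left _ _).trans_lt ht'))
      · exact absurd (h2 x h) (not_le.2 ((le_max_right _ _).trans_lt ht'))
    · exact exists_theta hEc hEi hEim hEcpt hC.openJ huniv hC.disjLJ hrJ hrL hU hcL.isClosed
        hcR.isClosed hα hβ' h1 h2
    · refine exists_theta (E := fun x => 1 - E x) (continuousOn_const.sub hEc)
        (fun x hx y hy h => hEi hx hy (by simpa using h)) ?_ (fun a b ha hb => ?_)
        hC.openJ huniv hC.disjLJ hrJ hrL hU hcL.isClosed hcR.isClosed
        (show 1 - β < 1 by linarith) (show 0 < 1 - α' by linarith)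
        (fun x hx => by linarith [h1 x hx]) (fun x hx => by linarith [h2 x hx])
      · have : (fun x => 1 - E x) '' J = (fun t => 1 - t) '' (E '' J) := by rw [image_image]
        rw [this, hEim]
        simp
      · convert hEcpt (1 - b) (1 - a) (by linarith) (by linarith) using 2
        ext x
        simp only [mem_preimage, mem_Icc]
        constructor <;> rintro ⟨_, _⟩ <;> constructor <;> linarith
    · exfalso
      obtain ⟨t, ht0, ht⟩ := exists_between (lt_min (lt_min hβ hβ') one_pos)
      obtain ⟨x, hx, rfl⟩ : t ∈ E '' J := hEim ▸ ⟨ht0, ht.trans_le (min_le_right _ _)⟩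
      have ht' := ht.trans_le (min_le_left _ _)
      rcases hU.symm ▸ hx with h | h
      · exact absurd (h1 x h) (not_le.2 (ht'.trans_le (min_le_left _ _)))
      · exact absurd (h2 x h) (not_le.2 (ht'.trans_le (min_le_right _ _)))
  have : Nonempty X := ⟨r⟩
  choose! φ hφL hφ using hθs
  refine ⟨θ, φ, hθc, hθ0, hθm, fun t ht => ?_,
    fun x hx => hθi (hφL _ (hθm x hx)) hx (hφ _ (hθm x hx)), hφ, ?_⟩
  · -- `θ` is a closed map, so its inverse is continuous wherever the fibre is a single point
    refine tendsto_nhds.2 fun U hUo hUt => ?_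
    have hcl : IsClosed (θ '' Uᶜ) := (hUo.isClosed_compl.isCompact.image hθc).isClosed
    have htn : t ∉ θ '' Uᶜ := by
      rintro ⟨x, hx, hxt⟩
      have hxL : x ∉ L := fun h => ht.1.ne' (hxt.symm.trans ((hθ0 x).2 h))
      exact hx (hθi hxL (hφL t ht) (hxt.trans (hφ t ht).symm) ▸ hUt)
    filter_upwards [self_mem_nhdsWithin, mem_nhdsWithin_of_mem_nhds (hcl.isOpen_compl.mem_nhds htn)]
      with s hs hs'
    by_contra hsU
    exact hs' ⟨φ s, hsU, hφ s hs⟩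
  · exact hC.denseJ.mono fun x hx => disjoint_right.1 hC.disjLJ hx

/-! ### Paths and extensions in terms of the coordinate -/

namespace Coord

variable {X : Type*} [TopologicalSpace X] {L : Set X} {θ : X → ℝ} {φ : ℝ → X}

lemma notMem (h : Coord L θ φ) {t : ℝ} (ht : t ∈ Ioc (0 : ℝ) 1) : φ t ∉ L := fun hL =>
  ht.1.ne' ((h.right t ht).symm.trans ((h.zero_iff _).2 hL))

lemma isClosed (h : Coord L θ φ) : IsClosed L := by
  have : L = θ ⁻¹' {0} := by
    ext x
    exact (h.zero_iff x).symm
  rw [this]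
  exact isClosed_singleton.preimage h.contθ

/-- A path starting in `Lᶜ` never reaches `L`: just before its first arrival at a point `p ∈ L` it
would sweep the whole end of the ray, hence pass near every point of `L`. -/
lemma no_path [T2Space X] (h : Coord L θ φ) (hL : L.Nontrivial) {γ : ℝ → X} (hγ : Continuous γ)
    {a b : ℝ} (ha : γ a ∉ L) (hb : γ b ∈ L) : False := by
  -- reparametrise so that the path runs over `[0, 1]`
  wlog H : a = 0 ∧ b = 1 generalizing γ a b
  · refine this (γ := fun u => γ (a + u * (b - a))) (a := 0) (b := 1) (by fun_prop) ?_ ?_ ⟨rfl, rfl⟩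
    · simpa using ha
    · simpa using hb
  obtain ⟨rfl, rfl⟩ := H
  obtain ⟨s, ⟨hs01, hsL⟩, hmin⟩ : ∃ s, IsLeast (Icc (0 : ℝ) 1 ∩ γ ⁻¹' L) s :=
    (isCompact_Icc.inter_right (h.isClosed.preimage hγ)).exists_isLeast
      ⟨1, ⟨zero_le_one, le_rfl⟩, hb⟩
  have hs0 : 0 < s := hs01.1.lt_of_ne (by rintro rfl; exact ha hsL)
  obtain ⟨q, hq, hqp⟩ := hL.exists_ne (γ s)
  obtain ⟨U, V, hU, hV, hpU, hqV, hUV⟩ := t2_separation hqp.symm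
  obtain ⟨ε, hε, hball⟩ := Metric.mem_nhds_iff.1 ((hU.preimage hγ).mem_nhds hpU)
  let t₀ := max 0 (s - ε / 2)
  have ht₀s : t₀ < s := max_lt hs0 (by linarith)
  have ht₀ : γ t₀ ∉ L := fun hh =>
    not_le.2 ht₀s (hmin ⟨⟨le_max_left _ _, ht₀s.le.trans hs01.2⟩, hh⟩)
  have hη := (h.mem _ ht₀).1
  have hW : IsOpen (V ∩ θ ⁻¹' Iio (θ (γ t₀))) := hV.inter (isOpen_Iio.preimage h.contθ)
  obtain ⟨y, ⟨hyV, hyη⟩, hyL⟩ := h.dense.inter_open_nonempty _ hW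
    ⟨q, hqV, by change θ q < _; rwa [(h.zero_iff q).2 hq]⟩
  obtain ⟨t, ht, hty⟩ := intermediate_value_Icc' ht₀s.le (h.contθ.comp hγ).continuousOn
    (show θ y ∈ Icc (θ (γ s)) (θ (γ t₀)) from
      ⟨by rw [(h.zero_iff _).2 hsL]; exact (h.mem y hyL).1.le, le_of_lt hyη⟩)
  replace hty : θ (γ t) = θ y := hty
  have htL : γ t ∉ L := fun hh => (h.mem y hyL).1.ne' (hty.symm.trans ((h.zero_iff _).2 hh))
  have hγy : γ t = y := by rw [← h.left _ htL, hty, h.left _ hyL]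
  have htU : γ t ∈ U := hball (by
    rw [Metric.mem_ball, Real.dist_eq, abs_lt]
    constructor <;> linarith [ht.1, ht.2, le_max_right 0 (s - ε / 2)])
  exact disjoint_left.1 hUV htU (hγy ▸ hyV)

/-- Since `Lᶜ` is an absolute retract, self-maps of its compact subsets extend. -/
lemma exists_extension [NormalSpace X] (h : Coord L θ φ) {M : Set X} (hM : IsClosed M)
    (hML : M ⊆ Lᶜ) {F : X → X} (hF : ContinuousOn F M) (hFM : MapsTo F M M) :
    ∃ G : X → X, Continuous G ∧ (∀ x, G x ∉ L) ∧ EqOn F G M := by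
  obtain ⟨g, hg, hgf⟩ := ContinuousMap.exists_restrict_eq_forall_mem_of_closed
    (⟨fun x : M => θ (F x), h.contθ.comp (continuousOn_iff_continuous_domRestrict.1 hF)⟩ : C(M, ℝ))
    (t := Ioc 0 1) (fun x => h.mem _ (hML (hFM x.2))) ⟨1, one_pos, le_rfl⟩ hM
  refine ⟨fun x => φ (g x), h.contφ.comp_continuous g.continuous hg, fun x => h.notMem (hg x),
    fun x hx => ?_⟩
  have : g x = θ (F x) := DFunLike.congr_fun hgf (⟨x, hx⟩ : M)
  change F x = φ (g x)
  rw [this, h.left _ (hML (hFM hx))]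

lemma mem_MSpace_of_subset [NormalSpace X] [T2Space X] (h : Coord L θ φ) {M : Set X}
    (hM : IsCompact M) (hML : M ⊆ Lᶜ) {F : X → X} (hF : ContinuousOn F M)
    (hmin : MinimalSystemOn F M) : M ∈ MSpace X ∧ M ∈ MSetIn Lᶜ := by
  obtain ⟨G, hG, hGL, hFG⟩ := h.exists_extension hM.isClosed hML hF
    (fun x hx => hmin.2.1 ▸ mem_image_of_mem F hx)
  exact ⟨⟨hM, G, hG, hmin.congr hFG⟩,
    mem_MSetIn_iff.2 ⟨hML, hM, G, hG.continuousOn, fun x _ => hGL x, hmin.congr hFG⟩⟩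

end Coord

/-! ### The retraction onto `L` -/

namespace Coord

variable {X : Type*} [MetricSpace X] [CompactSpace X] {L : Set X} {θ : X → ℝ} {φ : ℝ → X}

lemma exists_infDist_lt (h : Coord L θ φ) {ε : ℝ} (hε : 0 < ε) :
    ∃ η > 0, ∀ x, θ x < η → Metric.infDist x L < ε := by
  have hK : IsCompact {x : X | ε ≤ Metric.infDist x L} :=
    (isClosed_le continuous_const (Metric.continuous_infDist_pt L)).isCompact
  rcases Set.eq_empty_or_nonempty {x : X | ε ≤ Metric.infDist x L} with hE | hne
  · refine ⟨1, one_pos, fun x _ => ?_⟩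
    by_contra! hx
    exact (hE ▸ hx : x ∈ (∅ : Set X))
  · obtain ⟨x₀, hx₀, hmin⟩ := hK.exists_isMinOn hne h.contθ.continuousOn
    have hx₀L : x₀ ∉ L := fun hL => by
      have : ε ≤ Metric.infDist x₀ L := hx₀
      rw [Metric.infDist_zero_of_mem hL] at this
      linarith
    refine ⟨θ x₀, (h.mem _ hx₀L).1, fun x hx => ?_⟩
    by_contra! hxε
    exact not_le.2 hx (hmin hxε)

/-- Close to `L`, a segment of the ray can be followed within `L` up to a small error, joining
prescribed nearest points at the two ends of the segment. -/
lemma exists_bridge (h : Coord L θ φ) [LocallyConnectedSpace L] {l : ℝ → L}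
    (hl : ∀ t, Metric.infDist (φ t) L = dist (φ t) (l t)) (hLc : IsCompact L) {e : ℝ}
    (he : 0 < e) :
    ∃ η > 0, ∀ a b, 0 < a → a < b → b ≤ η → b ≤ 1 → ∃ g : ℝ → L, Continuous g ∧ g a = l a ∧
      g b = l b ∧ ∀ t ∈ Icc a b, dist (g t : X) (φ t) ≤ e := by
  have : CompactSpace L := isCompact_iff_compactSpace.1 hLc
  obtain ⟨δ, hδ, hint⟩ := exists_interpolation (L := L) (e := e / 4) (by linarith)
  have hε : 0 < min (δ / 3) (e / 4) := lt_min (by linarith) (by linarith)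
  obtain ⟨η, hη, hηε⟩ := h.exists_infDist_lt hε
  refine ⟨η / 2, by linarith, fun a b ha hab hbη hb1 => ?_⟩
  have hnear : ∀ t ∈ Icc a b, dist (φ t) (l t) < min (δ / 3) (e / 4) := fun t ht => by
    rw [← hl]
    refine hηε _ ?_
    rw [h.right t ⟨ha.trans_le ht.1, ht.2.trans hb1⟩]
    linarith [ht.2]
  have huc := isCompact_Icc.uniformContinuousOn_of_continuous
    (h.contφ.mono fun t (ht : t ∈ Icc a b) => ⟨ha.trans_le ht.1, ht.2.trans hb1⟩)
  obtain ⟨ω, hω, hφω⟩ := Metric.uniformContinuousOn_iff.1 huc _ hε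
  have hba : 0 < b - a := by linarith
  obtain ⟨M, hM⟩ := exists_nat_gt (max 1 ((b - a) / ω))
  have hM0 : (0 : ℝ) < M := one_pos.trans ((le_max_left _ _).trans_lt hM)
  have hMω : (b - a) / M < ω := by
    have := (le_max_right _ _).trans_lt hM
    rw [div_lt_iff₀ hω] at this
    rw [div_lt_iff₀ hM0]
    linarith
  -- sampling times, constant from the `M`-th one on
  obtain ⟨τ, hτ⟩ : ∃ τ : ℕ → ℝ, ∀ j, τ j = a + min (j : ℝ) M * ((b - a) / M) :=
    ⟨_, fun _ => rfl⟩
  have hd0 : 0 < (b - a) / M := div_pos hba hM0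
  have hMd : M * ((b - a) / M) = b - a := by field_simp
  have hτm : ∀ j, τ j ∈ Icc a b := fun j => by
    have h1 : 0 ≤ min (j : ℝ) M := le_min (Nat.cast_nonneg _) hM0.le
    have h2 := mul_le_mul_of_nonneg_right (min_le_right (j : ℝ) M) hd0.le
    have h3 := mul_nonneg h1 hd0.le
    rw [hτ]
    constructor <;> linarith
  have hstep : ∀ i, dist (l (τ i)) (l (τ (i + 1))) < δ := fun i => by
    have h1 := hnear _ (hτm i)
    have h2 := hnear _ (hτm (i + 1))
    have h3 : dist (φ (τ i)) (φ (τ (i + 1))) < min (δ / 3) (e / 4) := by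
      refine hφω _ (hτm i) _ (hτm (i + 1)) ?_
      have h4 : |min ((i + 1 : ℕ) : ℝ) M - min (i : ℝ) M| ≤ 1 := by
        push_cast
        rw [abs_le]
        rcases le_total ((i : ℝ) + 1) M with h | h <;> rcases le_total (i : ℝ) M with h' | h' <;>
          simp only [min_eq_left, min_eq_right, h, h'] <;> constructor <;> linarith
      rw [dist_comm, Real.dist_eq, hτ, hτ, show ∀ p q r : ℝ, a + p * q - (a + r * q) = (p - r) * q
        by intros; ring, abs_mul, abs_of_pos hd0]
      nlinarith
    have h5 := min_le_left (δ / 3) (e / 4)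
    rw [Subtype.dist_eq]
    have h6 := dist_triangle4 (l (τ i) : X) (φ (τ i)) (φ (τ (i + 1))) (l (τ (i + 1)))
    rw [dist_comm (l (τ i) : X) (φ (τ i))] at h6
    linarith
  obtain ⟨g, hg, hgn, hge⟩ := hint _ hstep
  refine ⟨fun t => g ((t - a) / ((b - a) / M)), by fun_prop, ?_, ?_, fun t ht => ?_⟩
  · have := hgn 0
    simp only [Nat.cast_zero, hτ, min_eq_left hM0.le, zero_mul, add_zero] at this
    simpa using this
  · have := hgn M
    simp only [hτ, min_self, hMd, add_sub_cancel] at this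
    rw [← this]
    field_simp
  · set u := (t - a) / ((b - a) / M) with hu
    have hu0 : 0 ≤ u := div_nonneg (by linarith [ht.1]) hd0.le
    have huM : u ≤ M := by
      rw [hu, div_le_iff₀ hd0, hMd]
      linarith [ht.2]
    have h1 := Nat.floor_le hu0
    have h2 := Nat.lt_floor_add_one u
    have htu : t = a + u * ((b - a) / M) := by rw [hu]; field_simp; ring
    have h3 : dist (φ (τ ⌊u⌋₊)) (φ t) < min (δ / 3) (e / 4) := by
      refine hφω _ (hτm _) _ ht ?_
      rw [dist_comm, Real.dist_eq, hτ, min_eq_left (h1.trans huM)]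
      nth_rewrite 1 [htu]
      rw [show ∀ p q r : ℝ, a + p * q - (a + r * q) = (p - r) * q by intros; ring, abs_mul,
        abs_of_pos hd0, abs_of_nonneg (by linarith)]
      nlinarith
    have h4 := hge u
    rw [Subtype.dist_eq] at h4
    have h5 := hnear _ (hτm ⌊u⌋₊)
    have h6 := dist_triangle4 (g u : X) (l (τ ⌊u⌋₊)) (φ (τ ⌊u⌋₊)) (φ t)
    rw [dist_comm (l _ : X)] at h6
    have h7 := min_le_right (δ / 3) (e / 4)
    change dist (g u : X) (φ t) ≤ e
    linarith

/-- A path in `L` asymptotic to the ray. -/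
lemma exists_shadow (h : Coord L θ φ) [LocallyConnectedSpace L] (hLc : IsCompact L)
    (hne : L.Nonempty) :
    ∃ p : ℝ → L, ContinuousOn p (Ioi 0) ∧
      ∀ ε > 0, ∃ η > 0, ∀ t, 0 < t → t < η → dist (p t : X) (φ t) ≤ ε := by
  classical
  have hl' : ∀ t, ∃ l : L, Metric.infDist (φ t) L = dist (φ t) (l : X) := fun t => by
    obtain ⟨y, hy, hyd⟩ := hLc.exists_infDist_eq_dist hne (φ t)
    exact ⟨⟨y, hy⟩, hyd⟩
  choose l hl using hl'
  have hb := fun m : ℕ => h.exists_bridge hl hLc (e := 1 / ((m : ℝ) + 1)) (by positivity)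
  choose η hη hbr using hb
  obtain ⟨τ, hτ0, hτs⟩ : ∃ τ : ℕ → ℝ, τ 0 = min 1 (η 0) ∧
      ∀ m, τ (m + 1) = min (τ m / 2) (η (m + 1)) :=
    ⟨fun m => Nat.rec (min 1 (η 0)) (fun m r => min (r / 2) (η (m + 1))) m, rfl, fun _ => rfl⟩
  have hτp : ∀ m, 0 < τ m := fun m => by
    induction m with
    | zero => exact hτ0 ▸ lt_min one_pos (hη 0)
    | succ m ih => exact hτs m ▸ lt_min (by linarith) (hη _)
  have hτh : ∀ m, τ (m + 1) ≤ τ m / 2 := fun m => hτs m ▸ min_le_left _ _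
  have hτη : ∀ m, τ m ≤ η m := fun m => by
    cases m with
    | zero => exact hτ0 ▸ min_le_right _ _
    | succ m => exact hτs m ▸ min_le_right _ _
  have hanti : StrictAnti τ := strictAnti_nat_of_succ_lt fun m => by linarith [hτh m, hτp m]
  have hτ1 : ∀ m, τ m ≤ 1 / 2 ^ m := fun m => by
    induction m with
    | zero => simpa using hτ0 ▸ min_le_left _ _
    | succ m ih =>
      refine (hτh m).trans ?_
      rw [pow_succ, ← div_div]
      linarith
  have hτle : ∀ m, τ m ≤ 1 := fun m => (hanti.antitone (Nat.zero_le m)).trans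
    (hτ0 ▸ min_le_left _ _)
  have hg := fun m => hbr m (τ (m + 1)) (τ m) (hτp _) (hanti (Nat.lt_succ_self m)) (hτη m) (hτle m)
  choose g hgc hga hgb hge using hg
  have hex : ∀ t, 0 < t → ∃ k, τ (k + 1) ≤ t := fun t ht => by
    obtain ⟨k, hk⟩ := exists_pow_lt_of_lt_one ht (show (1 / 2 : ℝ) < 1 by norm_num)
    refine ⟨k, (hτh k).trans ?_⟩
    have := hτ1 k
    rw [div_pow, one_pow] at hk
    linarith [hτp k]
  -- glue the pieces `g k`, defined over `[τ (k + 1), τ k]`; `g 0` is used beyond `τ 0` too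
  obtain ⟨p, hp⟩ : ∃ p : ℝ → L, ∀ t (k : ℕ), τ (k + 1) ≤ t → (∀ j < k, t < τ (j + 1)) →
      p t = g k t := by
    refine ⟨fun t => if ht : 0 < t then g (Nat.find (hex t ht)) t else l 0, fun t k hk hj => ?_⟩
    have ht : 0 < t := (hτp _).trans_le hk
    have : Nat.find (hex t ht) = k :=
      (Nat.find_eq_iff _).2 ⟨hk, fun j hjk => not_le.2 (hj j hjk)⟩
    simp only [ht, dif_pos, this]
  have hpg : ∀ m t, τ (m + 1) ≤ t → t ≤ τ m → p t = g m t := by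
    intro m t h1 h2
    rcases h2.lt_or_eq with h2 | rfl
    · exact hp t m h1 fun j hj => h2.trans_le (hanti.antitone hj)
    · cases m with
      | zero => exact hp _ 0 h1 fun j hj => absurd hj (Nat.not_lt_zero j)
      | succ m =>
        rw [hp _ m le_rfl fun j hj => hanti (by omega), hga, hgb]
  have hcont : ∀ m, ContinuousOn p (Ici (τ (m + 1))) := fun m => by
    induction m with
    | zero =>
      exact (hgc 0).continuousOn.congr fun t ht => hp t 0 ht fun j hj =>
        absurd hj (Nat.not_lt_zero j)
    | succ m ih =>
      have h1 : ContinuousOn p (Icc (τ (m + 2)) (τ (m + 1))) :=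
        (hgc (m + 1)).continuousOn.congr fun t ht => hpg (m + 1) t ht.1 ht.2
      rw [← Icc_union_Ici_eq_Ici (hanti (Nat.lt_succ_self (m + 1))).le]
      exact h1.union_of_isClosed ih isClosed_Icc isClosed_Ici
  refine ⟨p, fun t ht => ?_, fun ε hε => ?_⟩
  · obtain ⟨k, hk⟩ := hex (t / 2) (half_pos ht)
    have ht' : 0 < t := ht
    exact ((hcont k).continuousAt (Ici_mem_nhds (by linarith))).continuousWithinAt
  · obtain ⟨n, hn⟩ := exists_nat_one_div_lt hε
    refine ⟨τ n, hτp n, fun t ht htn => ?_⟩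
    have hk := Nat.find_spec (hex t ht)
    set k := Nat.find (hex t ht)
    have hnk : n ≤ k := by
      by_contra! hlt
      exact not_le.2 htn ((hanti.antitone hlt).trans hk)
    have htk : t ≤ τ k := by
      rcases Nat.eq_zero_or_pos k with h0 | h0
      · have : n = 0 := by omega
        rw [h0, ← this]
        exact htn.le
      · have := Nat.find_min (hex t ht) (m := k - 1) (by omega)
        rw [Nat.sub_add_cancel h0] at this
        exact (not_le.1 this).le
    rw [hpg k t hk htk]
    refine (hge k t ⟨hk, htk⟩).trans (le_trans ?_ hn.le)
    exact Nat.one_div_le_one_div hnk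

open Classical in
/-- `L` is a retract of `X`. -/
lemma exists_retraction (h : Coord L θ φ) [LocallyConnectedSpace L] (hLc : IsCompact L)
    (hne : L.Nonempty) :
    ∃ ρ : X → X, Continuous ρ ∧ (∀ x, ρ x ∈ L) ∧ ∀ x ∈ L, ρ x = x := by
  obtain ⟨p, hpc, hpφ⟩ := h.exists_shadow hLc hne
  refine ⟨fun x => if x ∈ L then x else p (θ x), continuous_iff_continuousAt.2 fun x => ?_,
    fun x => ?_, fun x hx => if_pos hx⟩
  · by_cases hx : x ∈ L
    · rw [Metric.continuousAt_iff']
      intro ε hε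
      obtain ⟨η, hη, hpη⟩ := hpφ (ε / 2) (half_pos hε)
      have h1 : θ ⁻¹' Iio η ∈ 𝓝 x :=
        (isOpen_Iio.preimage h.contθ).mem_nhds (by
          change θ x < η
          rwa [(h.zero_iff x).2 hx])
      filter_upwards [h1, Metric.ball_mem_nhds x (half_pos hε)] with y hy hyx
      rw [if_pos hx]
      by_cases hyL : y ∈ L
      · rw [if_pos hyL]
        exact (Metric.mem_ball.1 hyx).trans (by linarith)
      · rw [if_neg hyL]
        have h2 := hpη (θ y) (h.mem y hyL).1 hy
        rw [h.left y hyL] at h2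
        have h3 := dist_triangle (p (θ y) : X) y x
        have h4 := Metric.mem_ball.1 hyx
        linarith
    · have h1 : ContinuousAt (fun x => (p (θ x) : X)) x :=
        continuous_subtype_val.continuousAt.comp
          ((hpc.continuousAt (Ioi_mem_nhds (h.mem x hx).1)).comp h.contθ.continuousAt)
      refine h1.congr ?_
      filter_upwards [h.isClosed.isOpen_compl.mem_nhds hx] with y hy
      exact (if_neg hy).symm
  · change (if x ∈ L then x else (p (θ x) : X)) ∈ L
    split_ifs with hx
    · exact hx
    · exact (p _).2

end Coord

/-! ### Minimal sets of self-maps of `X` -/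

namespace Coord

variable {X : Type*} [MetricSpace X] {L : Set X} {θ : X → ℝ} {φ : ℝ → X}

/-- A continuous self-map of `X` sends `L` into `L` or into its complement. -/
lemma mapsTo_or (h : Coord L θ φ) [LocallyConnectedSpace L] (hLc : IsCompact L)
    (hLconn : IsPreconnected L) (hLn : L.Nontrivial) {F : X → X} (hF : Continuous F) :
    MapsTo F L L ∨ MapsTo F L Lᶜ := by
  have : CompactSpace L := isCompact_iff_compactSpace.1 hLc
  have : PreconnectedSpace L := Subtype.preconnectedSpace hLconn
  have hFL : Continuous fun x : L => F x := hF.comp continuous_subtype_val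
  have hclopen : IsClopen {x : L | F x ∈ L} := by
    refine ⟨h.isClosed.preimage hFL, Metric.isOpen_iff.2 fun x hx => ?_⟩
    -- nearby points of `L` are joined by a path in `L`
    obtain ⟨δ, hδ, hint⟩ := exists_interpolation (L := L) one_pos
    refine ⟨δ, hδ, fun y hy => ?_⟩
    by_contra hyL
    obtain ⟨g, hg, hgn, -⟩ := hint (fun i => if i = 0 then x else y) fun i => by
      rcases Nat.eq_zero_or_pos i with rfl | hi
      · simpa [dist_comm] using Metric.mem_ball.1 hy
      · simpa [hi.ne'] using hδ
    have h0 : g 0 = x := by simpa using hgn 0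
    have h1 : g 1 = y := by simpa using hgn 1
    refine h.no_path hLn (hFL.comp hg) (a := 1) (b := 0) ?_ ?_
    · change F (g 1) ∉ L
      rwa [h1]
    · change F (g 0) ∈ L
      rwa [h0]
  rcases isClopen_iff.1 hclopen with h0 | h1
  · exact Or.inr fun x hx hFx => (h0 ▸ (show (⟨x, hx⟩ : L) ∈ {x : L | F x ∈ L} from hFx) :
      (⟨x, hx⟩ : L) ∈ (∅ : Set L))
  · exact Or.inl fun x hx => (h1.symm ▸ mem_univ (⟨x, hx⟩ : L) :
      (⟨x, hx⟩ : L) ∈ {x : L | F x ∈ L})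

/-- If some point of the path connected set `Lᶜ` is sent to `Lᶜ`, all of them are. -/
lemma mapsTo_compl (h : Coord L θ φ) (hLn : L.Nontrivial) {F : X → X} (hF : Continuous F)
    {z : X} (hz : z ∉ L) (hFz : F z ∉ L) : MapsTo F Lᶜ Lᶜ := by
  intro w hw hFw
  have hzm := h.mem z hz
  have hwm := h.mem w hw
  -- `κ` is the identity between `θ z` and `θ w`, and keeps the path `φ ∘ κ` inside `Lᶜ`
  obtain ⟨κ, hκ⟩ : ∃ κ : ℝ → ℝ, ∀ t, κ t = max (min (θ z) (θ w)) (min t 1) := ⟨_, fun _ => rfl⟩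
  have hκc : Continuous κ := by
    rw [funext hκ]
    fun_prop
  have hκm : ∀ t, κ t ∈ Ioc (0 : ℝ) 1 := fun t => by
    rw [hκ]
    exact ⟨(lt_min hzm.1 hwm.1).trans_le (le_max_left _ _),
      max_le ((min_le_left _ _).trans hzm.2) (min_le_right _ _)⟩
  refine h.no_path hLn (hF.comp (h.contφ.comp_continuous hκc hκm)) (a := θ z) (b := θ w) ?_ ?_
  · change F (φ (κ (θ z))) ∉ L
    rwa [hκ, min_eq_left hzm.2, max_eq_right (min_le_left _ _), h.left z hz]
  · change F (φ (κ (θ w))) ∈ L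
    rwa [hκ, min_eq_left hwm.2, max_eq_right (min_le_right _ _), h.left w hw]

/-- Every minimal set of `X` lies on one side. -/
lemma subset_or (h : Coord L θ φ) [LocallyConnectedSpace L] (hLc : IsCompact L)
    (hLconn : IsPreconnected L) (hLn : L.Nontrivial) {F : X → X} (hF : Continuous F) {M : Set X}
    (hM : IsCompact M) (hmin : MinimalSystemOn F M) : (M ⊆ L ∧ MapsTo F L L) ∨ M ⊆ Lᶜ := by
  obtain ⟨-, hFM, hmin⟩ := hmin
  rcases h.mapsTo_or hLc hLconn hLn hF with hL | hL
  · rcases (M ∩ L).eq_empty_or_nonempty with h0 | hne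
    · exact Or.inr fun x hx hxL => (h0 ▸ ⟨hx, hxL⟩ : x ∈ (∅ : Set X))
    · refine Or.inl ⟨inter_eq_left.1 (hmin _ inter_subset_left hne
        (hM.isClosed.inter h.isClosed) ?_), hL⟩
      rintro _ ⟨x, hx, rfl⟩
      exact ⟨hFM ▸ mem_image_of_mem F hx.1, hL hx.2⟩
  · obtain ⟨x, hx⟩ := hLn.nonempty
    obtain ⟨z, hzF, hz⟩ := h.dense.inter_open_nonempty _ (h.isClosed.isOpen_compl.preimage hF)
      ⟨x, hL hx⟩
    have hc := h.mapsTo_compl hLn hF hz hzF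
    right
    rw [← hFM]
    rintro _ ⟨y, -, rfl⟩
    by_cases hy : y ∈ L
    exacts [hL hy, hc hy]

lemma mSpace_eq [CompactSpace X] (h : Coord L θ φ) [LocallyConnectedSpace L]
    (hLc : IsCompact L) (hLconn : IsPreconnected L) (hLn : L.Nontrivial) :
    MSpace X = MSetIn L ∪ MSetIn Lᶜ := by
  ext M
  constructor
  · rintro ⟨hM, F, hF, hmin⟩
    rcases h.subset_or hLc hLconn hLn hF hM hmin with ⟨hML, hFL⟩ | hML
    · exact Or.inl (mem_MSetIn_iff.2 ⟨hML, hM, F, hF.continuousOn, hFL, hmin⟩)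
    · exact Or.inr (h.mem_MSpace_of_subset hM hML hF.continuousOn hmin).2
  · rintro (hM | hM) <;> obtain ⟨hML, hM, F, hF, hFL, hmin⟩ := mem_MSetIn_iff.1 hM
    · obtain ⟨ρ, hρ, hρL, hρi⟩ := h.exists_retraction hLc hLn.nonempty
      exact ⟨hM, F ∘ ρ, hF.comp_continuous hρ hρL,
        hmin.congr fun x hx => congrArg F (hρi x (hML hx)).symm⟩
    · exact (h.mem_MSpace_of_subset hM hML (hF.mono hML) hmin).1

/-- Compact subsets of `Lᶜ` embed in the line, where infinite minimal sets are Cantor sets. -/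
lemma mSetIn_compl_eq (h : Coord L θ φ) :
    MSetIn Lᶜ = {M : Set X | M ⊆ Lᶜ ∧ ((M.Finite ∧ M.Nonempty) ∨ IsCantorSet M)} := by
  ext M
  constructor
  · intro hM
    obtain ⟨hML, hM, F, hF, -, hmin⟩ := mem_MSetIn_iff.1 hM
    refine ⟨hML, ?_⟩
    have : CompactSpace M := isCompact_iff_compactSpace.1 hM
    obtain ⟨g, hg⟩ := exists_isMinMap hM (hF.mono hML) hmin
    have hinj : Function.Injective fun x : M => θ x := fun x y hxy => Subtype.ext <| by
      rw [← h.left x (hML x.2), ← h.left y (hML y.2)]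
      exact congrArg φ hxy
    rcases hg.finite_or_cantor (h.contθ.comp continuous_subtype_val) hinj with hfin | ⟨htd, hni⟩
    · exact Or.inl ⟨Set.toFinite M, hmin.1⟩
    · exact Or.inr ⟨hmin.1, hM, totallyDisconnectedSpace_subtype_iff.1 htd, hni⟩
  · rintro ⟨hML, hM⟩
    obtain ⟨hMc, F, hF, hmin⟩ := exists_minimalSystemOn_of_finite_or_cantor hM
    exact (h.mem_MSpace_of_subset hMc hML hF hmin).2

end Coord

lemma disjoint_mSetIn {X : Type*} [TopologicalSpace X] [T2Space X] {A B : Set X}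
    (hAB : Disjoint A B) : Disjoint (MSetIn A) (MSetIn B) := by
  refine disjoint_left.2 fun M hA hB => ?_
  obtain ⟨hMA, -, F, -, -, ⟨x, hx⟩, -⟩ := mem_MSetIn_iff.1 hA
  exact disjoint_left.1 hAB (hMA hx) ((mem_MSetIn_iff.1 hB).1 hx)

/-- If `X = L ∪ J ∪ R ∈ 𝒞`, `R` a singleton, `L` nondegenerate, `L ∩ R = ∅`,
then `𝓜(X)` is the disjoint union of `𝓜(L)` and `𝓜(J ∪ R)`, and `𝓜(J ∪ R)` is the system
of all nonempty finite sets and Cantor sets contained in `J ∪ R`. -/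
theorem stmt1 {X : Type*} [TopologicalSpace X] [CompactSpace X] [ConnectedSpace X]
    [TopologicalSpace.MetrizableSpace X] {L J R : Set X} (hC : ClassC L J R)
    (hR : ∃ x, R = {x}) (hL : L.Nontrivial) (hLR : Disjoint L R) :
    MSpace X = MSetIn L ∪ MSetIn (J ∪ R) ∧
    Disjoint (MSetIn L) (MSetIn (J ∪ R)) ∧
    MSetIn (J ∪ R) =
      {M : Set X | M ⊆ J ∪ R ∧ ((M.Finite ∧ M.Nonempty) ∨ IsCantorSet M)} := by
  obtain ⟨hJR, θ, φ, h⟩ := hC.exists_coord hR hLR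
  let _ := TopologicalSpace.metrizableSpaceMetric X
  have := hC.locConnL
  rw [hJR]
  exact ⟨h.mSpace_eq hC.compactL hC.connL.isPreconnected hL, disjoint_mSetIn disjoint_compl_right,
    h.mSetIn_compl_eq⟩
end
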